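/- Let β ≥ 3 and γ ∈ [0, 1). Then there exists C > 0 such that, with probability tending to 1 as N → ∞, the variable speed random walk on the largest connected component of the Simplified Norros–Reittu graph G_N has mixing time t_mix ≤ log^C N. -/

import Mathlib

open scoped Classical
open Filter

noncomputable section

/-- Edge probability of the Simplified Norros–Reittu graph between (1-based) vertices
`i` and `j` of `[N]`: `1 - exp(-β N^(2γ-1) i^(-γ) j^(-γ))`. -/
def snrEdgeProb (β γ : ℝ) (N i j : ℕ) : ℝ :=
  1 - Real.exp (-(β * (N : ℝ) ^ (2 * γ - 1) * (i : ℝ) ^ (-γ) * (j : ℝ) ^ (-γ)))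

/-- Probability weight of a given simple graph on `[N]` when each edge `{i,j}` (`i ≠ j`)
is present independently with probability `p i j` (indices 1-based). -/
def graphWeight (p : ℕ → ℕ → ℝ) (N : ℕ) (G : SimpleGraph (Fin N)) : ℝ :=
  ∏ i : Fin N, ∏ j : Fin N,
    if i < j then
      (if G.Adj i j then p ((i : ℕ) + 1) ((j : ℕ) + 1)
       else 1 - p ((i : ℕ) + 1) ((j : ℕ) + 1))
    else 1

/-- Probability that the random graph with independent edge probabilities `p` satisfies the
property `A`. -/
def graphProb (p : ℕ → ℕ → ℝ) (N : ℕ) (A : SimpleGraph (Fin N) → Prop) : ℝ :=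
  ∑ G : SimpleGraph (Fin N), if A G then graphWeight p N G else 0

/-- Probability that the Simplified Norros–Reittu graph `G_N` satisfies the property `A`. -/
def snrProb (β γ : ℝ) (N : ℕ) (A : SimpleGraph (Fin N) → Prop) : ℝ :=
  graphProb (snrEdgeProb β γ N) N A

/-- Generator `Q = −(D − A)` of the variable speed random walk on a finite graph:
transition rate `1` across each edge. -/
def vsrwQ {V : Type*} [Fintype V] [DecidableEq V] (G : SimpleGraph V) : Matrix V V ℝ :=
  Matrix.of fun v w => if v = w then -(G.degree v : ℝ) else if G.Adj v w then 1 else 0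

/-- Total variation distance from the uniform stationary distribution at time `t` for the
variable speed random walk on `G`: `d(t) = max_x ½ Σ_y |p_t(x,y) − π(y)|` where
`p_t = exp(tQ)` and `π` is uniform. -/
def vsrwTVDist {V : Type*} [Fintype V] [DecidableEq V] (G : SimpleGraph V) (t : ℝ) : ℝ :=
  ⨆ x : V, (1 / 2) * ∑ y : V,
    |(NormedSpace.exp (t • vsrwQ G)) x y - ((Fintype.card V : ℝ))⁻¹|

/-- Mixing time of the variable speed random walk on `G` at total variation threshold `1/e`:
`t_mix = min{t ≥ 0 : d(t) ≤ 1/e}`. -/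
def vsrwMixingTime {V : Type*} [Fintype V] [DecidableEq V] (G : SimpleGraph V) : ℝ :=
  sInf {t : ℝ | 0 ≤ t ∧ vsrwTVDist G t ≤ (Real.exp 1)⁻¹}

/-- Number of vertices of the connected component of `v` in `G`. -/
def compCard {N : ℕ} (G : SimpleGraph (Fin N)) (v : Fin N) : ℕ :=
  Fintype.card {w : Fin N // G.Reachable v w}

open scoped Matrix.Norms.Operator in
theorem expEntry_hasDerivAt {V : Type*} [Fintype V] [DecidableEq V] (Q : Matrix V V ℝ)
    (x y : V) (t : ℝ) :
    HasDerivAt (fun u : ℝ => (NormedSpace.exp (u • Q)) x y)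
      ((NormedSpace.exp (t • Q) * Q) x y) t := by
  have h := hasDerivAt_exp_smul_const (𝕂 := ℝ) (𝔸 := Matrix V V ℝ) Q t
  exact (LinearMap.toContinuousLinearMap
    (Matrix.entryLinearMap ℝ ℝ x y)).hasFDerivAt.comp_hasDerivAt t h

theorem vsrwQ_row {V : Type*} [Fintype V] [DecidableEq V] (G : SimpleGraph V) (g : V → ℝ) (v : V) :
    ∑ w, vsrwQ G v w * g w = ∑ w, if G.Adj v w then g w - g v else 0 := by
  have hdeg : (G.degree v : ℝ) = ∑ w, if G.Adj v w then (1 : ℝ) else 0 := by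
    rw [← SimpleGraph.card_neighborFinset_eq_degree, Finset.sum_boole,
      SimpleGraph.neighborFinset_eq_filter]
  have h1 : ∀ w, vsrwQ G v w * g w =
      (if v = w then -(G.degree v : ℝ) * g v else 0) + (if G.Adj v w then g w else 0) := by
    intro w
    unfold vsrwQ
    by_cases h : v = w
    · subst h; simp
    · by_cases h2 : G.Adj v w <;> simp [h, h2]
  simp only [h1, Finset.sum_add_distrib, Finset.sum_ite_eq, Finset.mem_univ, if_true]
  rw [hdeg, neg_mul, Finset.sum_mul, ← Finset.sum_neg_distrib, ← Finset.sum_add_distrib]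
  refine Finset.sum_congr rfl fun w _ => ?_
  split_ifs <;> ring

theorem vsrwQ_symm {V : Type*} [Fintype V] [DecidableEq V] (G : SimpleGraph V) (v w : V) :
    vsrwQ G v w = vsrwQ G w v := by
  unfold vsrwQ
  by_cases h : v = w
  · subst h; rfl
  · simp [h, Ne.symm h, G.adj_comm]

/-- The (doubled) Dirichlet energy. -/
def energy {V : Type*} [Fintype V] (G : SimpleGraph V) (g : V → ℝ) : ℝ :=
  ∑ v, ∑ w, if G.Adj v w then (g v - g w) ^ 2 else 0

theorem energy_eq {V : Type*} [Fintype V] [DecidableEq V] (G : SimpleGraph V) (g : V → ℝ) :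
    ∑ v, 2 * g v * ∑ w, vsrwQ G v w * g w = - energy G g := by
  simp only [vsrwQ_row, energy]
  have h1 : ∑ v, g v * ∑ w, (if G.Adj v w then g w - g v else 0) =
      ∑ v, ∑ w, if G.Adj v w then g v * (g w - g v) else 0 := by
    refine Finset.sum_congr rfl fun v _ => ?_
    rw [Finset.mul_sum]
    refine Finset.sum_congr rfl fun w _ => ?_
    split_ifs <;> simp
  have h2 : ∑ v, ∑ w, (if G.Adj v w then g v * (g w - g v) else 0) =
      ∑ v, ∑ w, if G.Adj v w then g w * (g v - g w) else 0 := by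
    rw [Finset.sum_comm]
    refine Finset.sum_congr rfl fun v _ => Finset.sum_congr rfl fun w _ => ?_
    simp [G.adj_comm]
  have h3 : ∑ v, 2 * g v * ∑ w, (if G.Adj v w then g w - g v else 0) =
      ∑ v, g v * ∑ w, (if G.Adj v w then g w - g v else 0) +
      ∑ v, g v * ∑ w, (if G.Adj v w then g w - g v else 0) := by
    rw [← Finset.sum_add_distrib]
    exact Finset.sum_congr rfl fun v _ => by ring
  rw [h3, h1]
  nth_rewrite 2 [h2]
  rw [← Finset.sum_add_distrib, ← Finset.sum_neg_distrib]
  refine Finset.sum_congr rfl fun v _ => ?_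
  rw [← Finset.sum_add_distrib, ← Finset.sum_neg_distrib]
  refine Finset.sum_congr rfl fun w _ => ?_
  split_ifs <;> ring

theorem mixing_of_poincare {V : Type*} [Fintype V] [DecidableEq V] (G : SimpleGraph V)
    (A : ℝ) (hA : 0 < A)
    (hP : ∀ g : V → ℝ, ∑ v, g v = 0 → ∑ v, g v ^ 2 ≤ A * energy G g)
    (t : ℝ) (ht : 0 ≤ t) (hcard : (Fintype.card V : ℝ) * Real.exp (-(t / A)) ≤ 1 / 4) :
    vsrwMixingTime G ≤ t := by
  refine csInf_le ⟨0, fun s hs => hs.1⟩ ⟨ht, ?_⟩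
  unfold vsrwTVDist
  refine Real.iSup_le (fun x => ?_) (by positivity)
  set Q := vsrwQ G with hQ
  set n : ℝ := (Fintype.card V : ℝ) with hn
  have hnpos : 0 < n := by
    have : 0 < Fintype.card V := Fintype.card_pos_iff.mpr ⟨x⟩
    rw [hn]; exact_mod_cast this
  set P : ℝ → V → ℝ := fun s y => (NormedSpace.exp (s • Q)) x y with hPdef
  have hPQ : ∀ s y, (NormedSpace.exp (s • Q) * Q) x y = ∑ z, Q y z * P s z := by
    intro s y
    rw [Matrix.mul_apply]
    exact Finset.sum_congr rfl fun z _ => by rw [mul_comm, hQ, vsrwQ_symm]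
  have hder : ∀ s y, HasDerivAt (fun u => P u y) (∑ z, Q y z * P s z) s := by
    intro s y
    rw [← hPQ]
    exact expEntry_hasDerivAt Q x y s
  have hrow : ∀ y, ∑ z, Q y z * n⁻¹ = 0 := by
    intro y
    have := vsrwQ_row G (fun _ => n⁻¹) y
    rw [hQ, this]; simp
  have hcol : ∀ f : V → ℝ, ∑ y, ∑ z, Q y z * f z = 0 := by
    intro f
    rw [Finset.sum_comm]
    refine Finset.sum_eq_zero fun z _ => ?_
    rw [← Finset.sum_mul]
    have := vsrwQ_row G (fun _ => 1) z
    simp only [mul_one, sub_self, ite_self, Finset.sum_const_zero] at this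
    rw [Finset.sum_congr rfl fun y _ => vsrwQ_symm G y z, this, zero_mul]
  have hP0 : ∀ y, P 0 y = if x = y then 1 else 0 := by
    intro y
    simp [hPdef, Matrix.one_apply]
  have hsum : ∀ s, ∑ y, P s y = 1 := by
    intro s
    have hd : ∀ s, HasDerivAt (fun u => ∑ y, P u y) 0 s := by
      intro s
      have := HasDerivAt.fun_sum (u := Finset.univ) (fun y _ => hder s y)
      rwa [hcol] at this
    have := is_const_of_deriv_eq_zero (fun s => (hd s).differentiableAt) (fun s => (hd s).deriv) s 0
    rw [this]
    simp [hP0]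
  set g : ℝ → V → ℝ := fun s y => P s y - n⁻¹ with hg
  have hg0 : ∀ s, ∑ y, g s y = 0 := by
    intro s
    simp only [hg, Finset.sum_sub_distrib, hsum, Finset.sum_const, Finset.card_univ, nsmul_eq_mul]
    rw [← hn]; field_simp; ring
  have hQg : ∀ s y, ∑ z, Q y z * P s z = ∑ z, Q y z * g s z := by
    intro s y
    simp only [hg, mul_sub, Finset.sum_sub_distrib, hrow, sub_zero]
  set F : ℝ → ℝ := fun s => ∑ y, g s y ^ 2 with hF
  have hFd : ∀ s, HasDerivAt F (- energy G (g s)) s := by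
    intro s
    rw [← energy_eq]
    refine HasDerivAt.fun_sum fun y _ => ?_
    have h1 := ((hder s y).sub_const n⁻¹).pow 2
    rw [hQg] at h1
    have h2 : ((2 : ℕ) : ℝ) * (P s y - n⁻¹) ^ (2 - 1) * ∑ z, Q y z * g s z =
        2 * g s y * ∑ w, vsrwQ G y w * g s w := by
      simp only [hg, hQ]; norm_num
    exact h1.congr_deriv h2
  set H : ℝ → ℝ := fun s => Real.exp (s / A) * F s with hH
  have hHd : ∀ s, HasDerivAt H (Real.exp (s / A) * (1 / A) * F s + Real.exp (s / A) * (- energy G (g s))) s := by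
    intro s
    exact ((((hasDerivAt_id s).div_const A).exp).mul (hFd s))
  have hanti : Antitone H := by
    refine antitone_of_deriv_nonpos (fun s => (hHd s).differentiableAt) fun s => ?_
    rw [(hHd s).deriv]
    have h1 := hP (g s) (hg0 s)
    have h2 : (1 / A) * F s ≤ energy G (g s) := by
      rw [one_div, inv_mul_le_iff₀ hA]; exact h1
    have := Real.exp_pos (s / A)
    nlinarith
  have hF0 : F 0 ≤ 1 := by
    have h1 : F 0 = 1 - n⁻¹ := by
      have : ∀ y, g 0 y ^ 2 = (if x = y then 1 - 2 * n⁻¹ else 0) + n⁻¹ ^ 2 := by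
        intro y
        simp only [hg, hP0]
        split_ifs <;> ring
      simp only [hF, this, Finset.sum_add_distrib, Finset.sum_ite_eq, Finset.mem_univ, if_true,
        Finset.sum_const, Finset.card_univ, nsmul_eq_mul]
      rw [← hn]; field_simp; ring
    rw [h1]
    have : 0 < n⁻¹ := by positivity
    linarith
  have hFt : F t ≤ Real.exp (-(t / A)) := by
    have h1 := hanti ht
    simp only [hH, zero_div, Real.exp_zero, one_mul] at h1
    have h3 : Real.exp (t / A) * F t ≤ 1 := h1.trans hF0
    rw [Real.exp_neg, ← one_div, le_div_iff₀ (Real.exp_pos _), mul_comm]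
    exact h3
  have hCS : (∑ y, |g t y|) ^ 2 ≤ n * F t := by
    have := sq_sum_le_card_mul_sum_sq (s := (Finset.univ : Finset V)) (f := fun y => |g t y|)
    simpa [sq_abs] using this
  have hfin : (∑ y, |g t y|) ^ 2 ≤ (1 / 2 : ℝ) ^ 2 := by
    calc _ ≤ n * F t := hCS
      _ ≤ n * Real.exp (-(t / A)) := by gcongr
      _ ≤ 1 / 4 := hcard
      _ = _ := by norm_num
  have hle : ∑ y, |g t y| ≤ 1 / 2 := by
    exact le_of_sq_le_sq hfin (by norm_num)
  have he : (1 / 4 : ℝ) ≤ (Real.exp 1)⁻¹ := by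
    rw [← one_div]
    apply one_div_le_one_div_of_le (Real.exp_pos 1)
    have := Real.exp_one_lt_d9
    linarith
  calc _ = 1 / 2 * ∑ y, |g t y| := rfl
    _ ≤ 1 / 4 := by linarith
    _ ≤ _ := he

/-- Symmetric (inner and outer) vertex boundary. -/
def symBdry {V : Type*} [Fintype V] (G : SimpleGraph V) (S : Finset V) : Finset V :=
  Finset.univ.filter fun x => ∃ y, G.Adj x y ∧ ¬ (x ∈ S ↔ y ∈ S)

open MeasureTheory in
theorem coarea {V : Type*} [Fintype V] (m : ℝ) (a lo hi : V → ℝ) (ha : ∀ x, 0 ≤ a x)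
    (hlh : ∀ x, lo x ≤ hi x)
    (h : ∀ t : ℝ, 0 ≤ t → ((Finset.univ.filter fun x => t < a x).card : ℝ) ≤
      m * ((Finset.univ.filter fun x => lo x ≤ t ∧ t < hi x).card : ℝ)) (hm : 0 ≤ m) :
    ∑ x, a x ≤ m * ∑ x, (hi x - lo x) := by
  have hIndInt : ∀ u v : ℝ, Integrable ((Set.Ico u v).indicator (1 : ℝ → ℝ)) volume := by
    intro u v
    exact (integrable_indicator_iff measurableSet_Ico).mpr
      (integrableOn_const (C := (1 : ℝ)) (by simp))
  have hval : ∀ u v : ℝ, u ≤ v → ∫ t, (Set.Ico u v).indicator (1 : ℝ → ℝ) t = v - u := by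
    intro u v huv
    rw [integral_indicator_one measurableSet_Ico]
    simp [Measure.real, huv]
  have h1 : ∑ x, a x = ∫ t, ∑ x, (Set.Ico 0 (a x)).indicator (1 : ℝ → ℝ) t := by
    rw [integral_finsetSum _ fun x _ => hIndInt _ _]
    exact Finset.sum_congr rfl fun x _ => by rw [hval _ _ (ha x), sub_zero]
  have h2 : m * ∑ x, (hi x - lo x) =
      ∫ t, m * ∑ x, (Set.Ico (lo x) (hi x)).indicator (1 : ℝ → ℝ) t := by
    rw [integral_const_mul, integral_finsetSum _ fun x _ => hIndInt _ _]
    congr 1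
    exact Finset.sum_congr rfl fun x _ => by rw [hval _ _ (hlh x)]
  rw [h1, h2]
  refine integral_mono (integrable_finsetSum _ fun x _ => hIndInt _ _)
    ((integrable_finsetSum _ fun x _ => hIndInt _ _).const_mul m) fun t => ?_
  have e2 : ∑ x, (Set.Ico (lo x) (hi x)).indicator (1 : ℝ → ℝ) t =
      ((Finset.univ.filter fun x => lo x ≤ t ∧ t < hi x).card : ℝ) := by
    rw [← Finset.sum_boole]
    refine Finset.sum_congr rfl fun x _ => ?_
    simp [Set.indicator_apply]
  show ∑ x, (Set.Ico 0 (a x)).indicator (1 : ℝ → ℝ) t ≤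
    m * ∑ x, (Set.Ico (lo x) (hi x)).indicator (1 : ℝ → ℝ) t
  by_cases ht : 0 ≤ t
  · have e1 : ∑ x, (Set.Ico 0 (a x)).indicator (1 : ℝ → ℝ) t =
        ((Finset.univ.filter fun x => t < a x).card : ℝ) := by
      rw [← Finset.sum_boole]
      refine Finset.sum_congr rfl fun x _ => ?_
      simp [Set.indicator_apply, ht]
    rw [e1, e2]
    exact h t ht
  · have e1 : ∑ x, (Set.Ico 0 (a x)).indicator (1 : ℝ → ℝ) t = 0 := by
      refine Finset.sum_eq_zero fun x _ => ?_
      simp [ht]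
    rw [e1, e2]
    positivity

theorem cheeger_nonneg {V : Type*} [Fintype V] (G : SimpleGraph V) (m : ℝ) (hm : 1 ≤ m)
    (h : ∀ S : Finset V, 2 * S.card ≤ Fintype.card V →
      (S.card : ℝ) ≤ m * ((symBdry G S).card : ℝ))
    (f : V → ℝ) (hf : ∀ x, 0 ≤ f x)
    (hsupp : 2 * (Finset.univ.filter fun x => 0 < f x).card ≤ Fintype.card V) :
    ∑ x, f x ^ 2 ≤ 18 * m ^ 2 * energy G f := by
  set D : V → ℝ := fun x => ∑ y, if G.Adj x y then (f x - f y) ^ 2 else 0 with hD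
  have hDnn : ∀ x, 0 ≤ D x := fun x => Finset.sum_nonneg fun y _ => by split_ifs <;> positivity
  set M : V → ℝ := fun x => Real.sqrt (D x) with hM
  have hMnn : ∀ x, 0 ≤ M x := fun x => Real.sqrt_nonneg _
  have hMsq : ∀ x, M x ^ 2 = D x := fun x => Real.sq_sqrt (hDnn x)
  have hMadj : ∀ x y, G.Adj x y → |f x - f y| ≤ M x := by
    intro x y hxy
    apply Real.abs_le_sqrt
    have := Finset.single_le_sum (f := fun y => if G.Adj x y then (f x - f y) ^ 2 else 0)
      (fun y _ => by split_ifs <;> positivity) (Finset.mem_univ y)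
    simpa [hxy] using this
  set lo : V → ℝ := fun x => (max (f x - M x) 0) ^ 2 with hlo
  set hi : V → ℝ := fun x => (f x + M x) ^ 2 with hhi
  have hlo1 : ∀ x z, 0 ≤ z → f x - M x ≤ z → lo x ≤ z ^ 2 := by
    intro x z hz hxz
    exact pow_le_pow_left₀ (le_max_right _ _) (max_le hxz hz) 2
  have hhi1 : ∀ x z, 0 ≤ z → z ≤ f x + M x → z ^ 2 ≤ hi x := by
    intro x z hz hxz
    exact pow_le_pow_left₀ hz hxz 2
  have hlh : ∀ x, lo x ≤ hi x := fun x =>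
    (hlo1 x (f x) (hf x) (by linarith [hMnn x])).trans
      (hhi1 x (f x) (hf x) (by linarith [hMnn x]))
  have key := coarea m (fun x => f x ^ 2) lo hi (fun x => by positivity) hlh (by
    intro t ht
    refine (h (Finset.univ.filter fun x => t < f x ^ 2) ?_).trans ?_
    · refine le_trans ?_ hsupp
      refine Nat.mul_le_mul_left 2 (Finset.card_le_card fun x hx => ?_)
      simp only [Finset.mem_filter, Finset.mem_univ, true_and] at hx ⊢
      rcases (hf x).lt_or_eq with h0 | h0
      · exact h0
      · rw [← h0] at hx; norm_num at hx; linarith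
    · gcongr
      intro x hx
      simp only [symBdry, Finset.mem_filter, Finset.mem_univ, true_and] at hx ⊢
      obtain ⟨y, hxy, hne⟩ := hx
      have hab := abs_le.mp (hMadj x y hxy)
      have hMx := hMnn x
      by_cases h1 : t < f x ^ 2
      · have h2 : ¬ t < f y ^ 2 := fun h2 => hne ⟨fun _ => h2, fun _ => h1⟩
        push Not at h2
        exact ⟨(hlo1 x (f y) (hf y) (by linarith)).trans h2,
          h1.trans_le (hhi1 x (f x) (hf x) (by linarith))⟩
      · have h2 : t < f y ^ 2 := by
          by_contra h2
          exact hne ⟨fun h => absurd h h1, fun h => absurd h h2⟩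
        push Not at h1
        exact ⟨(hlo1 x (f x) (hf x) (by linarith)).trans h1,
          h2.trans_le (hhi1 x (f y) (hf y) (by linarith))⟩) (by linarith)
  have hdiff : ∀ x, hi x - lo x ≤ 4 * f x * M x + M x ^ 2 := by
    intro x
    have h1 := hf x
    have h2 := hMnn x
    simp only [hhi, hlo]
    by_cases hc : f x - M x ≤ 0
    · rw [max_eq_right hc]; nlinarith
    · push Not at hc
      rw [max_eq_left hc.le]; nlinarith
  have hpt : ∀ x, m * (hi x - lo x) ≤ f x ^ 2 / 2 + 9 * m ^ 2 * D x := by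
    intro x
    have h1 := mul_le_mul_of_nonneg_left (hdiff x) (by linarith : 0 ≤ m)
    rw [← hMsq]
    nlinarith [sq_nonneg (f x - 4 * m * M x), sq_nonneg (M x), mul_nonneg (by linarith : 0 ≤ m - 1) (mul_nonneg (by linarith : 0 ≤ m) (sq_nonneg (M x)))]
  have hE : energy G f = ∑ x, D x := rfl
  have hfin : ∑ x, f x ^ 2 ≤ (∑ x, f x ^ 2) / 2 + 9 * m ^ 2 * energy G f := by
    refine key.trans ?_
    rw [hE, Finset.mul_sum, Finset.mul_sum, Finset.sum_div, ← Finset.sum_add_distrib]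
    exact Finset.sum_le_sum fun x _ => hpt x
  linarith

theorem exists_median {V : Type*} [Fintype V] [Nonempty V] (g : V → ℝ) :
    ∃ c : ℝ, 2 * (Finset.univ.filter fun x => c < g x).card ≤ Fintype.card V ∧
      2 * (Finset.univ.filter fun x => g x < c).card ≤ Fintype.card V := by
  set I : Finset V := Finset.univ.filter fun x =>
    2 * (Finset.univ.filter fun y => g x < g y).card ≤ Fintype.card V with hI
  have hne : I.Nonempty := by
    obtain ⟨x, _, hx⟩ := Finset.exists_max_image Finset.univ g Finset.univ_nonempty
    refine ⟨x, ?_⟩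
    have : (Finset.univ.filter fun y => g x < g y) = ∅ := by
      apply Finset.filter_false_of_mem
      intro y hy
      exact not_lt.mpr (hx y hy)
    simp [hI, this]
  obtain ⟨x, hxI, hx⟩ := Finset.exists_min_image I g hne
  refine ⟨g x, (Finset.mem_filter.mp hxI).2, ?_⟩
  by_cases hemp : (Finset.univ.filter fun y => g y < g x).Nonempty
  · obtain ⟨z, hz, hzmax⟩ := Finset.exists_max_image _ g hemp
    have hzx : g z < g x := (Finset.mem_filter.mp hz).2
    have hzI : z ∉ I := fun hzI => not_le.mpr hzx (hx z hzI)
    have h1 : Fintype.card V < 2 * (Finset.univ.filter fun y => g z < g y).card := by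
      by_contra hcon
      exact hzI (Finset.mem_filter.mpr ⟨Finset.mem_univ _, not_lt.mp hcon⟩)
    have h2 : (Finset.univ.filter fun y => g y < g x).card +
        (Finset.univ.filter fun y => g z < g y).card ≤ Fintype.card V := by
      rw [← Finset.card_union_of_disjoint]
      · exact Finset.card_le_univ _
      · rw [Finset.disjoint_filter]
        intro y _ hy1 hy2
        have := hzmax y (by simp [hy1])
        linarith
    omega
  · rw [Finset.not_nonempty_iff_eq_empty] at hemp
    simp [hemp]

theorem poincare_of_iso {V : Type*} [Fintype V] (G : SimpleGraph V) (m : ℝ) (hm : 1 ≤ m)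
    (h : ∀ S : Finset V, 2 * S.card ≤ Fintype.card V →
      (S.card : ℝ) ≤ m * ((symBdry G S).card : ℝ))
    (g : V → ℝ) (hg : ∑ x, g x = 0) :
    ∑ x, g x ^ 2 ≤ 18 * m ^ 2 * energy G g := by
  rcases isEmpty_or_nonempty V with hV | hV
  · simp [energy]
  obtain ⟨c, hc1, hc2⟩ := exists_median g
  have h1 := cheeger_nonneg G m hm h (fun x => max (g x - c) 0) (fun x => le_max_right _ _) (by
    simpa using hc1)
  have h2 := cheeger_nonneg G m hm h (fun x => max (c - g x) 0) (fun x => le_max_right _ _) (by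
    simpa using hc2)
  have h3 : ∑ x, g x ^ 2 ≤ ∑ x, max (g x - c) 0 ^ 2 + ∑ x, max (c - g x) 0 ^ 2 := by
    have e : ∑ x, max (g x - c) 0 ^ 2 + ∑ x, max (c - g x) 0 ^ 2 = ∑ x, (g x ^ 2 - 2 * c * g x + c ^ 2) := by
      rw [← Finset.sum_add_distrib]
      refine Finset.sum_congr rfl fun x _ => ?_
      rcases le_total (g x) c with hx | hx
      · rw [max_eq_right (by linarith), max_eq_left (by linarith)]; ring
      · rw [max_eq_left (by linarith), max_eq_right (by linarith)]; ring
    rw [e, Finset.sum_add_distrib, Finset.sum_sub_distrib, ← Finset.mul_sum, hg]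
    have : 0 ≤ ∑ x : V, c ^ 2 := Finset.sum_nonneg fun _ _ => sq_nonneg c
    linarith
  have h4 : energy G (fun x => max (g x - c) 0) + energy G (fun x => max (c - g x) 0) ≤ energy G g := by
    unfold energy
    rw [← Finset.sum_add_distrib]
    refine Finset.sum_le_sum fun x _ => ?_
    rw [← Finset.sum_add_distrib]
    refine Finset.sum_le_sum fun y _ => ?_
    split_ifs
    · beta_reduce
      rcases le_total (g x) c with hx | hx <;> rcases le_total (g y) c with hy | hy
      · rw [max_eq_right (by linarith), max_eq_right (by linarith), max_eq_left (by linarith), max_eq_left (by linarith)]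
        nlinarith
      · rw [max_eq_right (by linarith), max_eq_left (by linarith), max_eq_left (by linarith), max_eq_right (by linarith)]
        nlinarith
      · rw [max_eq_left (by linarith), max_eq_right (by linarith), max_eq_right (by linarith), max_eq_left (by linarith)]
        nlinarith
      · rw [max_eq_left (by linarith), max_eq_left (by linarith), max_eq_right (by linarith), max_eq_right (by linarith)]
        nlinarith
    · simp
  nlinarith [mul_le_mul_of_nonneg_left h4 (by positivity : 0 ≤ 18 * m ^ 2)]

/-- The graph `G` with only the edges inside `S` kept. -/
def restr {V : Type*} (G : SimpleGraph V) (S : Finset V) : SimpleGraph V where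
  Adj x y := G.Adj x y ∧ x ∈ S ∧ y ∈ S
  symm := ⟨fun _ _ h => ⟨h.1.symm, h.2.2, h.2.1⟩⟩
  loopless := ⟨fun _ h => G.irrefl h.1⟩

/-- The component of `x` inside `S`. -/
def scomp {V : Type*} [Fintype V] (G : SimpleGraph V) (S : Finset V) (x : V) : Finset V :=
  Finset.univ.filter fun y => (restr G S).Reachable x y

/-- Outer vertex boundary. -/
def outBdry {V : Type*} [Fintype V] (G : SimpleGraph V) (S : Finset V) : Finset V :=
  Finset.univ.filter fun y => y ∉ S ∧ ∃ x ∈ S, G.Adj x y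

/-- A non-expanding set all of whose components are large. -/
def BadSet {V : Type*} [Fintype V] (G : SimpleGraph V) (m : ℕ) (S : Finset V) : Prop :=
  S.Nonempty ∧ 2 * S.card ≤ Fintype.card V ∧ (∀ x ∈ S, m ≤ (scomp G S x).card) ∧
    m * (outBdry G S).card ≤ S.card

theorem restr_reach_mem {V : Type*} (G : SimpleGraph V) (S : Finset V) {x y : V} (hx : x ∈ S)
    (h : (restr G S).Reachable x y) : y ∈ S := by
  obtain ⟨p⟩ := h
  induction p with
  | nil => exact hx
  | cons hadj p ih => exact ih hadj.2.2

theorem restr_exit {V : Type*} (G : SimpleGraph V) (S : Finset V) {x u : V} (hx : x ∈ S)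
    (hu : u ∉ S) (h : G.Reachable x u) :
    ∃ z ∈ S, (restr G S).Reachable x z ∧ ∃ y, y ∉ S ∧ G.Adj z y := by
  obtain ⟨p⟩ := h
  induction p with
  | nil => exact absurd hx hu
  | @cons a b c hadj p ih =>
    by_cases hb : b ∈ S
    · obtain ⟨z, hz, hr, hy⟩ := ih hb hu
      have : (restr G S).Adj a b := ⟨hadj, hx, hb⟩
      exact ⟨z, hz, this.reachable.trans hr, hy⟩
    · exact ⟨a, hx, SimpleGraph.Reachable.refl _, b, hb, hadj⟩

theorem restr_sub {V : Type*} (G : SimpleGraph V) (S B : Finset V)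
    (hclosed : ∀ x ∈ B, ∀ y, (restr G S).Adj x y → y ∈ B) {x y : V} (hx : x ∈ B)
    (h : (restr G S).Reachable x y) : (restr G B).Reachable x y := by
  obtain ⟨p⟩ := h
  induction p with
  | nil => exact SimpleGraph.Reachable.refl _
  | @cons a b c hadj p ih =>
    have hb := hclosed a hx b hadj
    have : (restr G B).Adj a b := ⟨hadj.1, hx, hb⟩
    exact this.reachable.trans (ih hb)

theorem iso_of_no_bad {V : Type*} [Fintype V] (G : SimpleGraph V) (m : ℕ) (v : V)
    (hno : ∀ S, ¬ BadSet G m S) (L : Set V) [Fintype ↥L] (hL : ∀ w, w ∈ L ↔ G.Reachable v w) (S : Finset ↥L)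
    (hS : 2 * S.card ≤ Fintype.card ↥L) :
    S.card ≤ m * (symBdry (G.induce L) S).card := by
  set S0 : Finset V := S.map (Function.Embedding.subtype _) with hS0
  have hmem : ∀ x, x ∈ S0 ↔ ∃ h : x ∈ L, (⟨x, h⟩ : ↥L) ∈ S := by
    intro x; simp [hS0]
  have hS0L : ∀ x ∈ S0, G.Reachable v x := fun x hx => (hL x).mp ((hmem x).mp hx).1
  have hS0c : S0.card = S.card := Finset.card_map _
  obtain ⟨u, huL, huS⟩ : ∃ u, G.Reachable v u ∧ u ∉ S0 := by
    by_contra hcon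
    push Not at hcon
    have h1 : S = Finset.univ := by
      ext ⟨x, hx⟩
      simp only [Finset.mem_univ, iff_true]
      obtain ⟨_, h⟩ := (hmem x).mp (hcon x ((hL x).mp hx))
      exact h
    have h2 : 0 < Fintype.card ↥L := Fintype.card_pos_iff.mpr ⟨⟨v, (hL v).mpr (SimpleGraph.Reachable.refl _)⟩⟩
    rw [h1, Finset.card_univ] at hS
    omega
  set Big := S0.filter fun x => m ≤ (scomp G S0 x).card with hBig
  set Small := S0.filter fun x => ¬ m ≤ (scomp G S0 x).card with hSmall
  have hcomp : ∀ x y, (restr G S0).Reachable x y → scomp G S0 x = scomp G S0 y := by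
    intro x y hxy
    ext z
    simp only [scomp, Finset.mem_filter, Finset.mem_univ, true_and]
    exact ⟨fun h => hxy.symm.trans h, fun h => hxy.trans h⟩
  have hclosed : ∀ x ∈ Big, ∀ y, (restr G S0).Adj x y → y ∈ Big := by
    intro x hx y hxy
    rw [hBig, Finset.mem_filter] at hx ⊢
    refine ⟨hxy.2.2, ?_⟩
    rw [← hcomp x y hxy.reachable]
    exact hx.2
  -- inner boundary points for the small components
  have hexit : ∀ x, ∃ z, x ∈ Small → z ∈ Small ∧ (restr G S0).Reachable x z ∧
      ∃ y, y ∉ S0 ∧ G.Adj z y := by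
    intro x
    by_cases hx : x ∈ Small
    · have hx' := Finset.mem_filter.mp hx
      have hr : G.Reachable x u := (hS0L x hx'.1).symm.trans huL
      obtain ⟨z, hz, h1, h2⟩ := restr_exit G S0 hx'.1 huS hr
      refine ⟨z, fun _ => ⟨?_, h1, h2⟩⟩
      rw [hSmall, Finset.mem_filter]
      refine ⟨hz, ?_⟩
      rw [← hcomp x z h1]; exact hx'.2
    · exact ⟨x, fun h => absurd h hx⟩
  choose b hb using hexit
  have hsmall : Small.card ≤ m * (Small.image b).card := by
    refine Finset.card_le_mul_card_image _ _ fun z hz => ?_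
    obtain ⟨x, hx, rfl⟩ := Finset.mem_image.mp hz
    have h1 := (Finset.mem_filter.mp (hb x hx).1).2
    refine le_trans (Finset.card_le_card ?_) (not_le.mp h1).le
    intro y hy
    rw [Finset.mem_filter] at hy
    have := (hb y hy.1).2.1
    rw [hy.2] at this
    simp only [scomp, Finset.mem_filter, Finset.mem_univ, true_and]
    exact this.symm
  have hbig : Big.card ≤ m * (outBdry G Big).card := by
    by_contra hcon
    push Not at hcon
    have hbs : Big.card ≤ S0.card := Finset.card_filter_le _ _
    refine hno Big ⟨?_, ?_, ?_, hcon.le⟩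
    · rw [← Finset.card_pos]; omega
    · have : Fintype.card ↥L ≤ Fintype.card V := Fintype.card_subtype_le _
      omega
    · intro x hx
      refine (Finset.mem_filter.mp hx).2.trans (Finset.card_le_card ?_)
      intro y hy
      simp only [scomp, Finset.mem_filter, Finset.mem_univ, true_and] at hy ⊢
      exact restr_sub G S0 Big hclosed hx hy
  have hout : ∀ y ∈ outBdry G Big, y ∉ S0 ∧ ∃ x ∈ S0, G.Adj x y := by
    intro y hy
    simp only [outBdry, Finset.mem_filter, Finset.mem_univ, true_and] at hy
    obtain ⟨hyB, x, hx, hxy⟩ := hy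
    have hxS := (Finset.mem_filter.mp hx).1
    refine ⟨fun hyS => hyB (hclosed x hx y ⟨hxy, hxS, hyS⟩), x, hxS, hxy⟩
  have hdisj : Disjoint (outBdry G Big) (Small.image b) := by
    rw [Finset.disjoint_left]
    intro y hy hy2
    obtain ⟨x, hx, rfl⟩ := Finset.mem_image.mp hy2
    exact (hout _ hy).1 (Finset.mem_filter.mp (hb x hx).1).1
  have hsub : outBdry G Big ∪ Small.image b ⊆
      (symBdry (G.induce L) S).map (Function.Embedding.subtype _) := by
    have haux : ∀ x y : V, G.Reachable v x → G.Adj x y → ¬ (x ∈ S0 ↔ y ∈ S0) →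
        x ∈ (symBdry (G.induce L) S).map (Function.Embedding.subtype _) := by
      intro x y hx hxy hne
      have hy : G.Reachable v y := hx.trans hxy.reachable
      rw [Finset.mem_map]
      refine ⟨⟨x, (hL x).mpr hx⟩, ?_, rfl⟩
      simp only [symBdry, Finset.mem_filter, Finset.mem_univ, true_and]
      refine ⟨⟨y, (hL y).mpr hy⟩, hxy, fun hiff => hne ?_⟩
      constructor
      · intro h
        obtain ⟨_, h⟩ := (hmem x).mp h
        exact (hmem y).mpr ⟨(hL y).mpr hy, hiff.mp h⟩
      · intro h
        obtain ⟨_, h⟩ := (hmem y).mp h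
        exact (hmem x).mpr ⟨(hL x).mpr hx, hiff.mpr h⟩
    intro y hy
    rcases Finset.mem_union.mp hy with hy | hy
    · obtain ⟨h1, x, hx, hxy⟩ := hout y hy
      exact haux y x ((hS0L x hx).trans hxy.reachable) hxy.symm fun h => h1 (h.mpr hx)
    · obtain ⟨x, hx, rfl⟩ := Finset.mem_image.mp hy
      obtain ⟨h1, _, w, hw, hzw⟩ := hb x hx
      have h1S := (Finset.mem_filter.mp h1).1
      exact haux _ w (hS0L _ h1S) hzw fun h => hw (h.mp h1S)
  have hcard := Finset.card_le_card hsub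
  rw [Finset.card_map, Finset.card_union_of_disjoint hdisj] at hcard
  have hsplit : Big.card + Small.card = S0.card := Finset.card_filter_add_card_filter_not _
  calc S.card = Big.card + Small.card := by rw [hsplit, hS0c]
    _ ≤ m * (outBdry G Big).card + m * (Small.image b).card := add_le_add hbig hsmall
    _ = m * ((outBdry G Big).card + (Small.image b).card) := by ring
    _ ≤ _ := Nat.mul_le_mul_left m hcard

theorem exists_closer {V : Type*} (H : SimpleGraph V) {x r : V} (hx : x ≠ r)
    (h : H.Reachable x r) : ∃ y, H.Adj x y ∧ H.dist y r < H.dist x r := by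
  obtain ⟨p, hp⟩ := h.exists_walk_length_eq_dist
  cases p with
  | nil => exact absurd rfl hx
  | @cons _ w _ hadj q =>
    refine ⟨w, hadj, ?_⟩
    have := SimpleGraph.dist_le q
    rw [SimpleGraph.Walk.length_cons] at hp
    omega

theorem exists_forest {V : Type*} [Fintype V] (G : SimpleGraph V) (m : ℕ) (S : Finset V)
    (hS : ∀ x ∈ S, m ≤ (scomp G S x).card) :
    ∃ R ⊆ S, m * R.card ≤ S.card ∧ ∃ π : V → V, ∀ x ∈ S \ R, π x ∈ S ∧ G.Adj x (π x) ∧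
      (π x ∈ S \ R → π (π x) ≠ x) := by
  set H := restr G S with hH
  set root : V → V := fun x => (H.connectedComponentMk x).out with hroot
  have hr1 : ∀ x, H.Reachable x (root x) := by
    intro x
    have : H.connectedComponentMk (root x) = H.connectedComponentMk x := Quot.out_eq _
    exact (SimpleGraph.ConnectedComponent.exact this).symm
  have hr2 : ∀ x y, H.Reachable x y → root x = root y := by
    intro x y hxy
    simp only [hroot]
    rw [SimpleGraph.ConnectedComponent.sound hxy]
  have hstep : ∀ x, ∃ y, x ≠ root x → H.Adj x y ∧ H.dist y (root x) < H.dist x (root x) := by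
    intro x
    by_cases hx : x = root x
    · exact ⟨x, fun h => absurd hx h⟩
    · obtain ⟨y, hy⟩ := exists_closer H hx (hr1 x)
      exact ⟨y, fun _ => hy⟩
  choose π hπ using hstep
  refine ⟨S.image root, ?_, ?_, π, ?_⟩
  · intro y hy
    obtain ⟨x, hx, rfl⟩ := Finset.mem_image.mp hy
    exact restr_reach_mem G S hx (hr1 x)
  · refine Finset.mul_card_image_le_card _ _ fun a ha => ?_
    obtain ⟨x, hx, rfl⟩ := Finset.mem_image.mp ha
    refine (hS x hx).trans (Finset.card_le_card fun y hy => ?_)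
    simp only [scomp, Finset.mem_filter, Finset.mem_univ, true_and] at hy ⊢
    exact ⟨restr_reach_mem G S hx hy, (hr2 x y hy).symm⟩
  · have hne : ∀ x ∈ S \ S.image root, x ≠ root x := by
      intro x hx h
      rw [Finset.mem_sdiff] at hx
      exact hx.2 (Finset.mem_image.mpr ⟨x, hx.1, h.symm⟩)
    intro x hx
    obtain ⟨h1, h2⟩ := hπ x (hne x hx)
    refine ⟨h1.2.2, h1.1, fun h3 h4 => ?_⟩
    obtain ⟨h5, h6⟩ := hπ (π x) (hne _ h3)
    rw [← hr2 x (π x) h1.reachable, h4] at h6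
    omega

/-- Graphs on `Fin N` are functions on ordered pairs. -/
def graphEquiv (N : ℕ) :
    SimpleGraph (Fin N) ≃ ({e : Fin N × Fin N // e.1 < e.2} → Bool) where
  toFun G e := decide (G.Adj e.1.1 e.1.2)
  invFun ω :=
    { Adj := fun i j => ∃ h : min i j < max i j, ω ⟨(min i j, max i j), h⟩ = true
      symm := ⟨fun i j h => by
        simp only [min_comm j i, max_comm j i]
        exact h⟩
      loopless := ⟨fun i h => by simp at h⟩ }
  left_inv G := by
    ext i j
    simp only [decide_eq_true_eq, exists_prop]
    rcases lt_trichotomy i j with h | h | h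
    · simp [min_eq_left h.le, max_eq_right h.le, h]
    · subst h; simp
    · simp [min_eq_right h.le, max_eq_left h.le, h, G.adj_comm]
  right_inv ω := by
    ext ⟨⟨i, j⟩, h⟩
    have h' : i < j := h
    simp [min_eq_left h'.le, max_eq_right h'.le, h']

theorem prod_pairs {N : ℕ} (f : Fin N → Fin N → ℝ) :
    (∏ i, ∏ j, if i < j then f i j else 1) =
      ∏ e : {e : Fin N × Fin N // e.1 < e.2}, f e.1.1 e.1.2 := by
  rw [← Finset.prod_product' Finset.univ Finset.univ (fun i j => if i < j then f i j else 1),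
    Finset.univ_product_univ, ← Finset.prod_filter]
  exact Finset.prod_subtype _ (by simp) (fun e : Fin N × Fin N => f e.1 e.2)

theorem sum_graph_prod (N : ℕ) (h : Fin N → Fin N → Bool → ℝ) :
    (∑ G : SimpleGraph (Fin N), ∏ i, ∏ j, if i < j then h i j (decide (G.Adj i j)) else 1) =
      ∏ i, ∏ j, if i < j then h i j true + h i j false else 1 := by
  have h1 : ∀ G : SimpleGraph (Fin N),
      (∏ i, ∏ j, if i < j then h i j (decide (G.Adj i j)) else 1) =
      ∏ e : {e : Fin N × Fin N // e.1 < e.2}, h e.1.1 e.1.2 (graphEquiv N G e) := by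
    intro G
    rw [prod_pairs (fun i j => h i j (decide (G.Adj i j)))]
    rfl
  simp only [h1]
  rw [Equiv.sum_comp (graphEquiv N) (fun ω => ∏ e : {e : Fin N × Fin N // e.1 < e.2},
    h e.1.1 e.1.2 (ω e)), prod_pairs (fun i j => h i j true + h i j false)]
  rw [show (∏ e : {e : Fin N × Fin N // e.1 < e.2}, (h e.1.1 e.1.2 true + h e.1.1 e.1.2 false)) =
    ∏ e : {e : Fin N × Fin N // e.1 < e.2}, ∑ b : Bool, h e.1.1 e.1.2 b by simp]
  rw [Finset.prod_univ_sum, Fintype.piFinset_univ]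

theorem graphProb_true (p : ℕ → ℕ → ℝ) (N : ℕ) : graphProb p N (fun _ => True) = 1 := by
  have := sum_graph_prod N (fun i j b => if b then p ((i : ℕ) + 1) ((j : ℕ) + 1)
       else 1 - p ((i : ℕ) + 1) ((j : ℕ) + 1))
  simp only [decide_eq_true_eq] at this
  unfold graphProb graphWeight
  simp only [if_true]
  rw [this]
  simp

theorem graphWeight_nonneg (p : ℕ → ℕ → ℝ) (N : ℕ) (hp : ∀ i j, 0 ≤ p i j ∧ p i j ≤ 1)
    (G : SimpleGraph (Fin N)) : 0 ≤ graphWeight p N G := by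
  unfold graphWeight
  refine Finset.prod_nonneg fun i _ => Finset.prod_nonneg fun j _ => ?_
  have := hp ((i : ℕ) + 1) ((j : ℕ) + 1)
  split_ifs <;> linarith

theorem graphProb_mono (p : ℕ → ℕ → ℝ) (N : ℕ) (hp : ∀ i j, 0 ≤ p i j ∧ p i j ≤ 1)
    (A B : SimpleGraph (Fin N) → Prop) (hAB : ∀ G, A G → B G) :
    graphProb p N A ≤ graphProb p N B := by
  unfold graphProb
  refine Finset.sum_le_sum fun G _ => ?_
  have := graphWeight_nonneg p N hp G
  by_cases h : A G
  · simp [h, hAB G h]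
  · rw [if_neg h]; split_ifs <;> simp [this]

theorem graphProb_compl (p : ℕ → ℕ → ℝ) (N : ℕ) (A : SimpleGraph (Fin N) → Prop) :
    graphProb p N A = 1 - graphProb p N (fun G => ¬ A G) := by
  rw [← graphProb_true p N]
  unfold graphProb
  rw [← Finset.sum_sub_distrib]
  refine Finset.sum_congr rfl fun G _ => ?_
  by_cases h : A G <;> simp [h]

theorem graphProb_union {ι : Type*} (p : ℕ → ℕ → ℝ) (N : ℕ) (hp : ∀ i j, 0 ≤ p i j ∧ p i j ≤ 1)
    (s : Finset ι) (A : ι → SimpleGraph (Fin N) → Prop) :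
    graphProb p N (fun G => ∃ i ∈ s, A i G) ≤ ∑ i ∈ s, graphProb p N (A i) := by
  unfold graphProb
  rw [Finset.sum_comm]
  refine Finset.sum_le_sum fun G _ => ?_
  have hw := graphWeight_nonneg p N hp G
  have hnn : ∀ i ∈ s, 0 ≤ if A i G then graphWeight p N G else 0 := fun i _ => by
    split_ifs <;> simp [hw]
  by_cases h : ∃ i ∈ s, A i G
  · rw [if_pos h]
    obtain ⟨i, hi, hA⟩ := h
    have := Finset.single_le_sum hnn hi
    rwa [if_pos hA] at this
  · rw [if_neg h]
    exact Finset.sum_nonneg hnn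

theorem graphProb_edges (p : ℕ → ℕ → ℝ) (N : ℕ) (hp : ∀ i j, 0 ≤ p i j ∧ p i j ≤ 1)
    (A B : Finset (Fin N × Fin N)) (hA : ∀ e ∈ A, e.1 < e.2) (hB : ∀ e ∈ B, e.1 < e.2)
    (hAB : Disjoint A B) :
    graphProb p N (fun G => (∀ e ∈ A, G.Adj e.1 e.2) ∧ ∀ e ∈ B, ¬ G.Adj e.1 e.2) ≤
      (∏ e ∈ A, p ((e.1 : ℕ) + 1) ((e.2 : ℕ) + 1)) *
        ∏ e ∈ B, (1 - p ((e.1 : ℕ) + 1) ((e.2 : ℕ) + 1)) := by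
  set q : Fin N → Fin N → ℝ := fun i j => p ((i : ℕ) + 1) ((j : ℕ) + 1) with hq
  have hq01 : ∀ i j, 0 ≤ q i j ∧ q i j ≤ 1 := fun i j => hp _ _
  set h : Fin N → Fin N → Bool → ℝ := fun i j b =>
    if b then (if (i, j) ∈ B then 0 else q i j) else (if (i, j) ∈ A then 0 else 1 - q i j) with hh
  have hhnn : ∀ i j b, 0 ≤ h i j b := by
    intro i j b
    have := hq01 i j
    simp only [hh]
    split_ifs <;> linarith
  have h1 : graphProb p N (fun G => (∀ e ∈ A, G.Adj e.1 e.2) ∧ ∀ e ∈ B, ¬ G.Adj e.1 e.2) ≤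
      ∑ G : SimpleGraph (Fin N), ∏ i, ∏ j, if i < j then h i j (decide (G.Adj i j)) else 1 := by
    unfold graphProb
    refine Finset.sum_le_sum fun G _ => ?_
    split_ifs with hG
    · refine le_of_eq ?_
      unfold graphWeight
      refine Finset.prod_congr rfl fun i _ => Finset.prod_congr rfl fun j _ => ?_
      by_cases hij : i < j
      · rw [if_pos hij, if_pos hij]
        by_cases hadj : G.Adj i j
        · have : (i, j) ∉ B := fun hb => hG.2 _ hb hadj
          simp [hh, hadj, this, hq]
        · have : (i, j) ∉ A := fun hb => hadj (hG.1 _ hb)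
          simp [hh, hadj, this, hq]
      · rw [if_neg hij, if_neg hij]
    · refine Finset.prod_nonneg fun i _ => Finset.prod_nonneg fun j _ => ?_
      split_ifs
      · exact hhnn _ _ _
      · exact zero_le_one
  refine h1.trans (le_of_eq ?_)
  rw [sum_graph_prod]
  have h2 : (∏ i, ∏ j, if i < j then h i j true + h i j false else 1) =
      ∏ i, ∏ j, ((if (i, j) ∈ A then q i j else 1) * (if (i, j) ∈ B then 1 - q i j else 1)) := by
    refine Finset.prod_congr rfl fun i _ => Finset.prod_congr rfl fun j _ => ?_
    by_cases hij : i < j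
    · rw [if_pos hij]
      by_cases ha : (i, j) ∈ A
      · have hb : (i, j) ∉ B := fun hb => Finset.disjoint_left.mp hAB ha hb
        simp [hh, ha, hb]
      · by_cases hb : (i, j) ∈ B <;> simp [hh, ha, hb]
    · rw [if_neg hij]
      have ha : (i, j) ∉ A := fun ha => hij (hA _ ha)
      have hb : (i, j) ∉ B := fun hb => hij (hB _ hb)
      simp [ha, hb]
  rw [h2]
  rw [← Finset.prod_product' Finset.univ Finset.univ (fun i j =>
    ((if (i, j) ∈ A then q i j else 1) * (if (i, j) ∈ B then 1 - q i j else 1)))]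
  rw [Finset.univ_product_univ, Finset.prod_mul_distrib]
  congr 1
  · simp [hq]
  · simp [hq]

/-- The unordered pair `{x, y}` as an ordered pair. -/
def ordPair {N : ℕ} (x y : Fin N) : Fin N × Fin N := (min x y, max x y)

theorem ordPair_lt {N : ℕ} {x y : Fin N} (h : x ≠ y) : (ordPair x y).1 < (ordPair x y).2 := by
  simp only [ordPair]
  rcases lt_or_gt_of_ne h with h | h
  · simp [h]
  · simp [h]

theorem ordPair_eq {N : ℕ} {x y a b : Fin N} (h : ordPair x y = ordPair a b) :
    (x = a ∧ y = b) ∨ (x = b ∧ y = a) := by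
  simp only [ordPair, Prod.mk.injEq] at h
  rcases le_total x y with h1 | h1 <;> rcases le_total a b with h2 | h2 <;>
    simp only [h1, h2, min_eq_left, min_eq_right, max_eq_left, max_eq_right] at h <;>
    simp [h.1, h.2]

theorem ordPair_adj {N : ℕ} (G : SimpleGraph (Fin N)) {x y : Fin N} :
    G.Adj (ordPair x y).1 (ordPair x y).2 ↔ G.Adj x y := by
  simp only [ordPair]
  rcases le_total x y with h1 | h1
  · simp [h1]
  · simp [h1, G.adj_comm]

theorem ordPair_fun {N : ℕ} (f : Fin N → Fin N → ℝ) (hf : ∀ x y, f x y = f y x) (x y : Fin N) :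
    f (ordPair x y).1 (ordPair x y).2 = f x y := by
  simp only [ordPair]
  rcases le_total x y with h1 | h1
  · simp [h1]
  · simp [h1, hf y x]

theorem forest_event (p : ℕ → ℕ → ℝ) (N : ℕ) (hp : ∀ i j, 0 ≤ p i j ∧ p i j ≤ 1)
    (hsymm : ∀ i j, p i j = p j i) (S K U : Finset (Fin N)) (hK : K ⊆ S) (hU : Disjoint S U)
    (π : Fin N → Fin N)
    (hπ : ∀ v ∈ K, π v ∈ S ∧ v ≠ π v ∧ (π v ∈ K → π (π v) ≠ v)) :
    graphProb p N (fun G => (∀ v ∈ K, G.Adj v (π v)) ∧ ∀ x ∈ S, ∀ y ∈ U, ¬ G.Adj x y) ≤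
      (∏ v ∈ K, p ((v : ℕ) + 1) ((π v : ℕ) + 1)) *
        ∏ x ∈ S, ∏ y ∈ U, (1 - p ((x : ℕ) + 1) ((y : ℕ) + 1)) := by
  have hUS : ∀ x ∈ S, ∀ y ∈ U, x ≠ y := by
    intro x hx y hy e
    subst e
    exact Finset.disjoint_left.mp hU hx hy
  have key := graphProb_edges p N hp (K.image fun v => ordPair v (π v))
    ((S ×ˢ U).image fun e => ordPair e.1 e.2) ?_ ?_ ?_
  · rw [Finset.prod_image, Finset.prod_image, Finset.prod_product] at key
    · refine le_trans (graphProb_mono p N hp _ _ ?_) (key.trans (le_of_eq ?_))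
      · rintro G ⟨h1, h2⟩
        refine ⟨?_, ?_⟩
        · intro e he
          obtain ⟨v, hv, rfl⟩ := Finset.mem_image.mp he
          exact (ordPair_adj G).mpr (h1 v hv)
        · intro e he
          obtain ⟨⟨x, y⟩, hv, rfl⟩ := Finset.mem_image.mp he
          rw [Finset.mem_product] at hv
          exact fun h => h2 x hv.1 y hv.2 ((ordPair_adj G).mp h)
      · congr 1
        · refine Finset.prod_congr rfl fun v _ => ?_
          exact ordPair_fun (fun i j => p ((i : ℕ) + 1) ((j : ℕ) + 1)) (fun _ _ => hsymm _ _) _ _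
        · refine Finset.prod_congr rfl fun x _ => Finset.prod_congr rfl fun y _ => ?_
          exact ordPair_fun (fun i j => 1 - p ((i : ℕ) + 1) ((j : ℕ) + 1))
            (fun i j => by simp only [hsymm ((i : ℕ) + 1)]) _ _
    · rintro ⟨x, y⟩ h1 ⟨a, b⟩ h2 h
      simp only [Finset.coe_product, Set.mem_prod, Finset.mem_coe] at h1 h2
      rcases ordPair_eq h with ⟨rfl, rfl⟩ | ⟨e1, e2⟩
      · rfl
      · exact absurd e1 (hUS _ h1.1 _ h2.2)
    · intro v hv u hu h
      rcases ordPair_eq h with ⟨e, _⟩ | ⟨e1, e2⟩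
      · exact e
      · exfalso
        have := (hπ u hu).2.2 (e1 ▸ hv)
        rw [← e1] at this
        exact this e2
  · intro e he
    obtain ⟨v, hv, rfl⟩ := Finset.mem_image.mp he
    exact ordPair_lt (hπ v hv).2.1
  · intro e he
    obtain ⟨⟨x, y⟩, hv, rfl⟩ := Finset.mem_image.mp he
    rw [Finset.mem_product] at hv
    exact ordPair_lt (hUS _ hv.1 _ hv.2)
  · rw [Finset.disjoint_left]
    intro e he he'
    obtain ⟨v, hv, rfl⟩ := Finset.mem_image.mp he
    obtain ⟨⟨x, y⟩, hxy, h⟩ := Finset.mem_image.mp he'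
    rw [Finset.mem_product] at hxy
    rcases ordPair_eq h with ⟨_, e⟩ | ⟨_, e⟩
    · exact hUS _ (hπ v hv).1 _ hxy.2 e.symm
    · exact hUS _ (hK hv) _ hxy.2 e.symm

/-- The forest event. -/
def ForestEv {N : ℕ} (S K U : Finset (Fin N)) (G : SimpleGraph (Fin N)) : Prop :=
  (∃ π : Fin N → Fin N, ∀ v ∈ K, π v ∈ S ∧ G.Adj v (π v) ∧ (π v ∈ K → π (π v) ≠ v)) ∧
    ∀ x ∈ S, ∀ y ∈ U, ¬ G.Adj x y

theorem forest_bound (p : ℕ → ℕ → ℝ) (N : ℕ) (hp : ∀ i j, 0 ≤ p i j ∧ p i j ≤ 1)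
    (hsymm : ∀ i j, p i j = p j i) (W : Fin N → ℝ) (hW : ∀ i, 1 ≤ W i) (c : ℝ) (hc : 0 ≤ c)
    (hpW : ∀ i j : Fin N, p ((i : ℕ) + 1) ((j : ℕ) + 1) = 1 - Real.exp (-(c * W i * W j)))
    (S K U : Finset (Fin N)) (hK : K ⊆ S) (hU : Disjoint S U) :
    graphProb p N (ForestEv S K U) ≤
      (∏ v ∈ K, (c * W v * ∑ u ∈ S, W u)) * Real.exp (-(c * (∑ u ∈ S, W u) * U.card)) := by
  set t : Fin N → Finset (Fin N) := fun v => if v ∈ K then S else {v} with ht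
  set good : (Fin N → Fin N) → Prop := fun π =>
    ∀ v ∈ K, π v ∈ S ∧ v ≠ π v ∧ (π v ∈ K → π (π v) ≠ v) with hgood
  have h1 : graphProb p N (ForestEv S K U) ≤
      graphProb p N (fun G => ∃ π ∈ (Fintype.piFinset t).filter good,
        (∀ v ∈ K, G.Adj v (π v)) ∧ ∀ x ∈ S, ∀ y ∈ U, ¬ G.Adj x y) := by
    refine graphProb_mono p N hp _ _ ?_
    rintro G ⟨⟨π, hπ⟩, h2⟩
    refine ⟨fun v => if v ∈ K then π v else v, ?_, ?_, h2⟩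
    · rw [Finset.mem_filter, Fintype.mem_piFinset]
      refine ⟨fun v => ?_, fun v hv => ?_⟩
      · by_cases hv : v ∈ K
        · simp [ht, hv, (hπ v hv).1]
        · simp [ht, hv]
      · obtain ⟨a, b, d⟩ := hπ v hv
        simp only [hv, if_true]
        refine ⟨a, b.ne, fun hh => ?_⟩
        simp only [hh, if_true]
        exact d hh
    · intro v hv
      simp only [hv, if_true]
      exact (hπ v hv).2.1
  have hexp : ∏ x ∈ S, ∏ y ∈ U, (1 - p ((x : ℕ) + 1) ((y : ℕ) + 1)) ≤
      Real.exp (-(c * (∑ u ∈ S, W u) * U.card)) := by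
    have : ∏ x ∈ S, ∏ y ∈ U, (1 - p ((x : ℕ) + 1) ((y : ℕ) + 1)) =
        Real.exp (∑ x ∈ S, ∑ y ∈ U, -(c * W x * W y)) := by
      rw [Real.exp_sum]
      refine Finset.prod_congr rfl fun x _ => ?_
      rw [Real.exp_sum]
      refine Finset.prod_congr rfl fun y _ => ?_
      rw [hpW]; ring
    rw [this]
    apply Real.exp_le_exp.mpr
    rw [Finset.mul_sum, Finset.sum_mul, ← Finset.sum_neg_distrib]
    refine Finset.sum_le_sum fun x _ => ?_
    rw [Finset.sum_neg_distrib, ← Finset.mul_sum]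
    apply neg_le_neg
    apply mul_le_mul_of_nonneg_left
    · calc (U.card : ℝ) = ∑ y ∈ U, 1 := by simp
        _ ≤ _ := Finset.sum_le_sum fun y _ => hW y
    · have := hW x
      positivity
  refine h1.trans ((graphProb_union p N hp _ _).trans ?_)
  have h3 : ∀ π ∈ (Fintype.piFinset t).filter good,
      graphProb p N (fun G => (∀ v ∈ K, G.Adj v (π v)) ∧ ∀ x ∈ S, ∀ y ∈ U, ¬ G.Adj x y) ≤
      (∏ v, if v ∈ K then c * W v * W (π v) else 1) *
        Real.exp (-(c * (∑ u ∈ S, W u) * U.card)) := by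
    intro π hπ
    rw [Finset.mem_filter] at hπ
    refine (forest_event p N hp hsymm S K U hK hU π hπ.2).trans ?_
    refine mul_le_mul ?_ hexp ?_ ?_
    · rw [Finset.prod_ite_mem, Finset.univ_inter]
      refine Finset.prod_le_prod (fun v _ => (hp _ _).1) fun v _ => ?_
      rw [hpW]
      have := Real.add_one_le_exp (-(c * W v * W (π v)))
      linarith
    · exact Finset.prod_nonneg fun x _ => Finset.prod_nonneg fun y _ => by
        linarith [(hp ((x : ℕ) + 1) ((y : ℕ) + 1)).2]
    · refine Finset.prod_nonneg fun v _ => ?_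
      have h1 := hW v
      have h2 := hW (π v)
      split_ifs <;> positivity
  refine (Finset.sum_le_sum h3).trans ?_
  rw [← Finset.sum_mul]
  refine mul_le_mul_of_nonneg_right ?_ (Real.exp_nonneg _)
  refine (Finset.sum_le_sum_of_subset_of_nonneg (Finset.filter_subset _ _) ?_).trans ?_
  · intro π _ _
    refine Finset.prod_nonneg fun v _ => ?_
    have h1 := hW v
    have h2 := hW (π v)
    split_ifs <;> positivity
  · rw [← Finset.prod_univ_sum t (fun v u => if v ∈ K then c * W v * W u else 1)]
    have : ∀ v, (∑ j ∈ t v, if v ∈ K then c * W v * W j else 1) =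
        if v ∈ K then c * W v * ∑ u ∈ S, W u else 1 := by
      intro v
      by_cases hv : v ∈ K
      · simp [ht, hv, Finset.mul_sum]
      · simp [ht, hv]
    simp only [this]
    rw [Finset.prod_ite_mem, Finset.univ_inter]

theorem xexp_le {x : ℝ} (hx : 1 ≤ x) : x * Real.exp (-(1.1 * x)) ≤ Real.exp (-1.1) := by
  have h1 : x ≤ Real.exp (x - 1) := by
    have := Real.add_one_le_exp (x - 1); linarith
  calc x * Real.exp (-(1.1 * x)) ≤ Real.exp (x - 1) * Real.exp (-(1.1 * x)) :=
        mul_le_mul_of_nonneg_right h1 (Real.exp_nonneg _)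
    _ = Real.exp (x - 1 + -(1.1 * x)) := by rw [Real.exp_add]
    _ ≤ _ := Real.exp_le_exp.mpr (by linarith)

theorem forest_num (N : ℕ) (hN : 0 < N) (β : ℝ) (hβ : 3 ≤ β) (W : Fin N → ℝ)
    (hW : ∀ i, 1 ≤ W i) (S K : Finset (Fin N)) (hK : K ⊆ S) (u : ℝ) (hu : 0.7 * N ≤ u) :
    (∏ v ∈ K, (β / N * W v * ∑ u ∈ S, W u)) * Real.exp (-(β / N * (∑ u ∈ S, W u) * u)) ≤
      (3 * Real.exp (-1.1) / N) ^ K.card * (K.card).factorial := by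
  have hN' : (0 : ℝ) < N := by exact_mod_cast hN
  have hWn : ∀ i, 0 ≤ W i := fun i => by linarith [hW i]
  set w := ∑ u ∈ S, W u with hw
  have hw0 : 0 ≤ w := Finset.sum_nonneg fun i _ => hWn i
  set z := β * w / 3 with hz
  have hz0 : 0 ≤ z := by positivity
  have hzw : w ≤ z := by rw [hz]; nlinarith
  set k := K.card with hk
  have e1 : ∏ v ∈ K, (β / N * W v * w) = (3 / N) ^ k * z ^ k * ∏ v ∈ K, W v := by
    rw [← mul_pow, hk, ← Finset.prod_const, ← Finset.prod_mul_distrib]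
    refine Finset.prod_congr rfl fun v _ => ?_
    rw [hz]; field_simp
  have e2 : z ^ k ≤ k.factorial * Real.exp z := by
    have := Real.pow_div_factorial_le_exp z hz0 k
    rw [div_le_iff₀ (by positivity)] at this
    linarith
  have e3 : Real.exp (-(β / N * w * u)) ≤ Real.exp (-(2.1 * z)) := by
    apply Real.exp_le_exp.mpr
    apply neg_le_neg
    have : β / N * w * (0.7 * N) ≤ β / N * w * u := mul_le_mul_of_nonneg_left hu (by positivity)
    refine le_trans (le_of_eq ?_) this
    rw [hz]; field_simp; norm_num; ring
  have e4 : Real.exp z * Real.exp (-(2.1 * z)) ≤ ∏ v ∈ K, Real.exp (-(1.1 * W v)) := by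
    rw [← Real.exp_add, ← Real.exp_sum]
    apply Real.exp_le_exp.mpr
    rw [Finset.sum_neg_distrib, ← Finset.mul_sum]
    have : ∑ v ∈ K, W v ≤ w := Finset.sum_le_sum_of_subset_of_nonneg hK fun i _ _ => hWn i
    linarith
  have e5 : (∏ v ∈ K, W v) * ∏ v ∈ K, Real.exp (-(1.1 * W v)) ≤ Real.exp (-1.1) ^ k := by
    rw [← Finset.prod_mul_distrib, hk, ← Finset.prod_const]
    exact Finset.prod_le_prod (fun v _ => mul_nonneg (hWn v) (Real.exp_nonneg _))
      fun v _ => xexp_le (hW v)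
  have hPW : 0 ≤ ∏ v ∈ K, W v := Finset.prod_nonneg fun v _ => hWn v
  rw [e1]
  calc (3 / N) ^ k * z ^ k * (∏ v ∈ K, W v) * Real.exp (-(β / N * w * u))
      ≤ (3 / N) ^ k * (k.factorial * Real.exp z) * (∏ v ∈ K, W v) * Real.exp (-(2.1 * z)) := by
        gcongr
    _ = (3 / N) ^ k * k.factorial * ((∏ v ∈ K, W v) * (Real.exp z * Real.exp (-(2.1 * z)))) := by
        ring
    _ ≤ (3 / N) ^ k * k.factorial * ((∏ v ∈ K, W v) * ∏ v ∈ K, Real.exp (-(1.1 * W v))) := by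
        gcongr
    _ ≤ (3 / N) ^ k * k.factorial * Real.exp (-1.1) ^ k := by gcongr
    _ = _ := by rw [mul_div_right_comm, mul_pow]; ring

theorem sum_finset_pow (N : ℕ) (a : ℝ) :
    ∑ T : Finset (Fin N), a ^ T.card = (1 + a) ^ N := by
  have := Finset.sum_pow_mul_eq_add_pow a 1 (Finset.univ : Finset (Fin N))
  simp only [one_pow, mul_one, Finset.powerset_univ, Finset.card_univ, Fintype.card_fin] at this
  rw [this, add_comm]

theorem sum_finset_pow_div_le (N : ℕ) (hN : 0 < N) (a : ℝ) (ha : 0 ≤ a) :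
    ∑ T : Finset (Fin N), (a / N) ^ T.card ≤ Real.exp a := by
  rw [sum_finset_pow]
  have hN' : (0 : ℝ) < N := by exact_mod_cast hN
  have h1 : 1 + a / N ≤ Real.exp (a / N) := by
    have := Real.add_one_le_exp (a / N); linarith
  calc (1 + a / N) ^ N ≤ Real.exp (a / N) ^ N := by gcongr
    _ = Real.exp a := by
      rw [← Real.exp_nat_mul]; congr 1; field_simp

theorem sum_finset_fact_le (N : ℕ) (hN : 0 < N) :
    ∑ K : Finset (Fin N), ((K.card).factorial : ℝ) / (N : ℝ) ^ K.card ≤ N + 1 := by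
  have hN' : (0 : ℝ) < N := by exact_mod_cast hN
  have := Finset.sum_powerset_apply_card
    (fun k => ((k).factorial : ℝ) / (N : ℝ) ^ k) (x := (Finset.univ : Finset (Fin N)))
  rw [Finset.powerset_univ] at this
  rw [this, Finset.card_univ, Fintype.card_fin]
  calc _ ≤ ∑ k ∈ Finset.range (N + 1), (1 : ℝ) := by
        refine Finset.sum_le_sum fun k _ => ?_
        rw [nsmul_eq_mul]
        have h := Nat.choose_le_pow_div k N (α := ℝ)
        calc (N.choose k : ℝ) * ((k.factorial : ℝ) / N ^ k)
            ≤ (N ^ k / k.factorial) * ((k.factorial : ℝ) / N ^ k) := by gcongr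
          _ = 1 := by field_simp
    _ = N + 1 := by simp

theorem exp_num : 3 * Real.exp (-1.1) ≤ Real.exp (-(1 / 1000)) := by
  have h1 : (2.7182818283 : ℝ) < Real.exp 1 := Real.exp_one_gt_d9
  have h2 : (1.1039 : ℝ) ≤ Real.exp 0.099 := by
    have := Real.quadratic_le_exp_of_nonneg (x := 0.099) (by norm_num)
    refine le_trans ?_ this
    norm_num
  have h3 : (3 : ℝ) ≤ Real.exp 1.099 := by
    have : (1.099 : ℝ) = 1 + 0.099 := by norm_num
    rw [this, Real.exp_add]
    nlinarith
  calc 3 * Real.exp (-1.1) ≤ Real.exp 1.099 * Real.exp (-1.1) := by gcongr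
    _ = _ := by rw [← Real.exp_add]; norm_num

/-- Forest event of a bad set. -/
theorem bad_forest {N : ℕ} (G : SimpleGraph (Fin N)) (m : ℕ) (S : Finset (Fin N))
    (h : BadSet G m S) :
    ∃ K R : Finset (Fin N), K ∪ R = S ∧ Disjoint K R ∧ m ≤ S.card ∧ m * R.card ≤ S.card ∧
      ForestEv S K (S ∪ outBdry G S)ᶜ G := by
  obtain ⟨hne, _, hc, _⟩ := h
  obtain ⟨R, hRS, hR, π, hπ⟩ := exists_forest G m S hc
  refine ⟨S \ R, R, Finset.sdiff_union_of_subset hRS, Finset.sdiff_disjoint, ?_, hR,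
    ⟨π, fun v hv => ?_⟩, ?_⟩
  · obtain ⟨x, hx⟩ := hne
    refine (hc x hx).trans (Finset.card_le_card ?_)
    intro y hy
    simp only [scomp, Finset.mem_filter] at hy
    exact restr_reach_mem G S hx hy.2
  · simp only [Finset.mem_sdiff] at hπ hv ⊢
    exact hπ v hv
  · intro x hx y hy hadj
    simp only [Finset.mem_compl, Finset.mem_union, not_or, outBdry, Finset.mem_filter,
      Finset.mem_univ, true_and, not_and, not_exists] at hy
    exact hy.2 hy.1 x hx hadj

theorem bad_disj {N : ℕ} (G : SimpleGraph (Fin N)) (S : Finset (Fin N)) :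
    Disjoint S (outBdry G S) := by
  rw [Finset.disjoint_left]
  intro x hx hx'
  simp only [outBdry, Finset.mem_filter] at hx'
  exact hx'.2.1 hx

theorem small_regime (p : ℕ → ℕ → ℝ) (N : ℕ) (hN : 0 < N) (hp : ∀ i j, 0 ≤ p i j ∧ p i j ≤ 1)
    (hsymm : ∀ i j, p i j = p j i) (W : Fin N → ℝ) (hW : ∀ i, 1 ≤ W i) (β : ℝ) (hβ : 3 ≤ β)
    (hpW : ∀ i j : Fin N, p ((i : ℕ) + 1) ((j : ℕ) + 1) = 1 - Real.exp (-(β / N * W i * W j)))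
    (m : ℕ) (hm : 1000 ≤ m) (hmN : (N : ℝ) ≤ Real.exp (m / 4000)) :
    graphProb p N (fun G => ∃ S, BadSet G m S ∧ 1000 * S.card ≤ 295 * N) ≤
      (N + 1) * Real.exp 3 / N ^ 2 := by
  have hN' : (0 : ℝ) < N := by exact_mod_cast hN
  set I : Finset (Finset (Fin N) × Finset (Fin N) × Finset (Fin N)) :=
    Finset.univ.filter fun x => Disjoint x.1 x.2.1 ∧ m ≤ x.1.card + x.2.1.card ∧
      m * x.2.1.card ≤ x.1.card + x.2.1.card ∧ m * x.2.2.card ≤ x.1.card + x.2.1.card ∧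
      1000 * (x.1.card + x.2.1.card) ≤ 295 * N with hI
  have h1 : graphProb p N (fun G => ∃ S, BadSet G m S ∧ 1000 * S.card ≤ 295 * N) ≤
      graphProb p N (fun G => ∃ x ∈ I, ForestEv (x.1 ∪ x.2.1) x.1 (x.1 ∪ x.2.1 ∪ x.2.2)ᶜ G) := by
    refine graphProb_mono p N hp _ _ ?_
    rintro G ⟨S, hb, hs⟩
    obtain ⟨K, R, hKR, hd, hmS, hmR, hF⟩ := bad_forest G m S hb
    refine ⟨(K, R, outBdry G S), ?_, ?_⟩
    · have : K.card + R.card = S.card := by rw [← hKR, Finset.card_union_of_disjoint hd]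
      simp only [hI, Finset.mem_filter, Finset.mem_univ, true_and, this]
      exact ⟨hd, hmS, hmR, hb.2.2.2, hs⟩
    · simpa only [hKR] using hF
  refine h1.trans ((graphProb_union p N hp _ _).trans ?_)
  set δ : ℝ := 1 / 4000 with hδ
  have h2 : ∀ x ∈ I, graphProb p N (ForestEv (x.1 ∪ x.2.1) x.1 (x.1 ∪ x.2.1 ∪ x.2.2)ᶜ) ≤
      ((x.1.card).factorial : ℝ) / (N : ℝ) ^ x.1.card *
        (((3 / 2) / N) ^ x.2.1.card * ((1 / N) ^ x.2.2.card * (1 / N ^ 2))) := by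
    rintro ⟨K, R, T⟩ hx
    simp only [hI, Finset.mem_filter, Finset.mem_univ, true_and] at hx
    obtain ⟨hd, hms, hmr, hmt, hs⟩ := hx
    dsimp only
    have hcard : (0.7 : ℝ) * N ≤ ((K ∪ R ∪ T)ᶜ).card := by
      have a1 : ((K ∪ R ∪ T)ᶜ).card = N - (K ∪ R ∪ T).card := by
        rw [Finset.card_compl, Fintype.card_fin]
      have a2 : (K ∪ R ∪ T).card ≤ K.card + R.card + T.card :=
        (Finset.card_union_le _ _).trans (Nat.add_le_add_right (Finset.card_union_le _ _) _)
      have a3 : 1000 * T.card ≤ K.card + R.card := le_trans (Nat.mul_le_mul_right _ hm) hmt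
      have a4 : 7 * N ≤ 10 * ((K ∪ R ∪ T)ᶜ).card := by omega
      have a5 : (7 : ℝ) * N ≤ 10 * (((K ∪ R ∪ T)ᶜ).card : ℝ) := by exact_mod_cast a4
      linarith
    refine (forest_bound p N hp hsymm W hW (β / N) (by positivity) hpW (K ∪ R) K _
      Finset.subset_union_left ?_).trans ((forest_num N hN β hβ W hW _ K
        Finset.subset_union_left _ hcard).trans ?_)
    · exact Finset.disjoint_of_subset_left Finset.subset_union_left disjoint_compl_right
    set k := K.card
    set r := R.card
    set t := T.card
    have hNle : ∀ n : ℕ, (N : ℝ) ^ n ≤ Real.exp (δ * (m * n)) := by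
      intro n
      calc (N : ℝ) ^ n ≤ Real.exp (m / 4000) ^ n := by gcongr
        _ = _ := by rw [← Real.exp_nat_mul]; congr 1; rw [hδ]; ring
    have b1 : (N : ℝ) ^ r ≤ Real.exp (δ * (k + r)) := (hNle r).trans <| by
      apply Real.exp_le_exp.mpr
      apply mul_le_mul_of_nonneg_left _ (by positivity)
      exact_mod_cast hmr
    have b2 : (N : ℝ) ^ t ≤ Real.exp (δ * (k + r)) := (hNle t).trans <| by
      apply Real.exp_le_exp.mpr
      apply mul_le_mul_of_nonneg_left _ (by positivity)
      exact_mod_cast hmt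
    have b3 : (N : ℝ) ^ 2 ≤ Real.exp (2 * δ * (k + r)) := (hNle 2).trans <| by
      apply Real.exp_le_exp.mpr
      have : (m : ℝ) ≤ k + r := by exact_mod_cast hms
      push_cast
      rw [hδ]
      linarith
    have b4 : Real.exp (1 / 1000) ≤ 3 / 2 := by
      have := Real.exp_bound_div_one_sub_of_interval (x := 1 / 1000) (by norm_num) (by norm_num)
      refine this.trans ?_
      norm_num
    have b5 : (3 * Real.exp (-1.1)) ^ k * ((N : ℝ) ^ r * N ^ t * N ^ 2) ≤ (3 / 2) ^ r := by
      calc (3 * Real.exp (-1.1)) ^ k * ((N : ℝ) ^ r * N ^ t * N ^ 2)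
          ≤ (Real.exp (-(1 / 1000))) ^ k * (Real.exp (δ * (k + r)) * Real.exp (δ * (k + r)) *
            Real.exp (2 * δ * (k + r))) := by
            gcongr
            exact exp_num
        _ = Real.exp (1 / 1000) ^ r := by
            rw [← Real.exp_nat_mul, ← Real.exp_nat_mul, ← Real.exp_add, ← Real.exp_add,
              ← Real.exp_add]
            congr 1
            rw [hδ]; ring
        _ ≤ _ := by gcongr
    have b6 : (3 * Real.exp (-1.1)) ^ k ≤ (3 / 2) ^ r / ((N : ℝ) ^ r * N ^ t * N ^ 2) := by
      rw [le_div_iff₀ (by positivity)]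
      exact b5
    calc (3 * Real.exp (-1.1) / N) ^ k * (k.factorial : ℝ)
        = k.factorial / (N : ℝ) ^ k * (3 * Real.exp (-1.1)) ^ k := by
          rw [div_pow]; ring
      _ ≤ k.factorial / (N : ℝ) ^ k * ((3 / 2) ^ r / ((N : ℝ) ^ r * N ^ t * N ^ 2)) := by
          gcongr
      _ = _ := by
          rw [div_pow (3 / 2 : ℝ) (N : ℝ), one_div_pow]; field_simp
  refine (Finset.sum_le_sum h2).trans ?_
  refine (Finset.sum_le_sum_of_subset_of_nonneg (Finset.filter_subset _ _) ?_).trans ?_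
  · intro x _ _
    positivity
  rw [← Finset.univ_product_univ, Finset.sum_product]
  simp_rw [← Finset.univ_product_univ, Finset.sum_product, ← Finset.mul_sum, ← Finset.sum_mul]
  have c1 := sum_finset_fact_le N hN
  have c2 := sum_finset_pow_div_le N hN (3 / 2) (by norm_num)
  have c3 := sum_finset_pow_div_le N hN 1 (by norm_num)
  have c4 : Real.exp 3 = Real.exp (3 / 2) * (Real.exp 1 * Real.exp (1 / 2)) := by
    rw [← Real.exp_add, ← Real.exp_add]; norm_num
  have c5 : (1 : ℝ) ≤ Real.exp (1 / 2) := Real.one_le_exp (by norm_num)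
  calc _ ≤ ((N : ℝ) + 1) * (Real.exp (3 / 2) * (Real.exp 1 * (1 / N ^ 2))) := by gcongr
    _ ≤ ((N : ℝ) + 1) * (Real.exp (3 / 2) * ((Real.exp 1 * Real.exp (1 / 2)) * (1 / N ^ 2))) := by
        gcongr
        exact le_mul_of_one_le_right (Real.exp_nonneg _) c5
    _ = _ := by rw [c4]; ring

theorem exp_num2 : Real.exp (-1.0218) ≤ 9 / 25 := by
  have h := Real.sum_le_exp_of_nonneg (x := 0.5109) (by norm_num) 6
  have h1 : (5 / 3 : ℝ) ≤ Real.exp 0.5109 := by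
    refine le_trans ?_ h
    norm_num [Finset.sum_range_succ, Nat.factorial]
  have h2 : Real.exp 1.0218 = Real.exp 0.5109 * Real.exp 0.5109 := by
    rw [← Real.exp_add]; norm_num
  rw [Real.exp_neg, inv_le_comm₀ (Real.exp_pos _) (by norm_num), h2]
  nlinarith

theorem exp_num3 : Real.exp (-0.4464) ≤ 16 / 25 := by
  have h := Real.sum_le_exp_of_nonneg (x := 0.2232) (by norm_num) 6
  have h1 : (5 / 4 : ℝ) ≤ Real.exp 0.2232 := by
    refine le_trans ?_ h
    norm_num [Finset.sum_range_succ, Nat.factorial]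
  have h2 : Real.exp 0.4464 = Real.exp 0.2232 * Real.exp 0.2232 := by
    rw [← Real.exp_add]; norm_num
  rw [Real.exp_neg, inv_le_comm₀ (Real.exp_pos _) (by norm_num), h2]
  nlinarith

theorem quad_num {s n : ℝ} (hn : 0 < n) (h1 : 0.295 * n ≤ s) (h2 : s ≤ 0.5 * n) :
    -(3 / n * s * (n - s)) ≤ -1.0218 * s + -0.4464 * (n - s) + -0.0077 * n := by
  have : 3 / n * s * (n - s) = 3 * s * (n - s) / n := by ring
  rw [this, neg_le, le_div_iff₀ hn]
  nlinarith [mul_nonneg (sub_nonneg.mpr h1) (sub_nonneg.mpr h2),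
    mul_nonneg (sub_nonneg.mpr h1) hn.le, sq_nonneg n]

theorem large_regime (p : ℕ → ℕ → ℝ) (N : ℕ) (hN : 0 < N) (hp : ∀ i j, 0 ≤ p i j ∧ p i j ≤ 1)
    (hsymm : ∀ i j, p i j = p j i) (W : Fin N → ℝ) (hW : ∀ i, 1 ≤ W i) (β : ℝ) (hβ : 3 ≤ β)
    (hpW : ∀ i j : Fin N, p ((i : ℕ) + 1) ((j : ℕ) + 1) = 1 - Real.exp (-(β / N * W i * W j)))
    (m : ℕ) (hm : 1000 ≤ m) (hmN : (N : ℝ) ≤ Real.exp (m / 4000)) :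
    graphProb p N (fun G => ∃ S, BadSet G m S ∧ 295 * N ≤ 1000 * S.card) ≤
      Real.exp 1 * Real.exp (-0.005 * N) := by
  have hN' : (0 : ℝ) < N := by exact_mod_cast hN
  set I : Finset (Finset (Fin N) × Finset (Fin N)) :=
    Finset.univ.filter fun x => Disjoint x.1 x.2 ∧ m * x.2.card ≤ x.1.card ∧
      295 * N ≤ 1000 * x.1.card ∧ 2 * x.1.card ≤ N with hI
  have h1 : graphProb p N (fun G => ∃ S, BadSet G m S ∧ 295 * N ≤ 1000 * S.card) ≤
      graphProb p N (fun G => ∃ x ∈ I, ForestEv x.1 ∅ (x.1 ∪ x.2)ᶜ G) := by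
    refine graphProb_mono p N hp _ _ ?_
    rintro G ⟨S, hb, hs⟩
    obtain ⟨K, R, hKR, hd, hmS, hmR, hF⟩ := bad_forest G m S hb
    refine ⟨(S, outBdry G S), ?_, ?_⟩
    · simp only [hI, Finset.mem_filter, Finset.mem_univ, true_and]
      have := hb.2.1
      rw [Fintype.card_fin] at this
      exact ⟨bad_disj G S, hb.2.2.2, hs, this⟩
    · exact ⟨⟨id, by simp⟩, hF.2⟩
  refine h1.trans ((graphProb_union p N hp _ _).trans ?_)
  have h2 : ∀ x ∈ I, graphProb p N (ForestEv x.1 ∅ (x.1 ∪ x.2)ᶜ) ≤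
      ((9 / 25 : ℝ) ^ x.1.card * (16 / 25) ^ (N - x.1.card)) *
        ((1 / N) ^ x.2.card * Real.exp (-0.005 * N)) := by
    rintro ⟨S, T⟩ hx
    simp only [hI, Finset.mem_filter, Finset.mem_univ, true_and] at hx
    obtain ⟨hd, hmt, hs1, hs2⟩ := hx
    dsimp only
    refine (forest_bound p N hp hsymm W hW (β / N) (by positivity) hpW S ∅ _
      (by simp) ?_).trans ?_
    · exact Finset.disjoint_of_subset_left Finset.subset_union_left disjoint_compl_right
    rw [Finset.prod_empty, one_mul]
    have hcard : (((S ∪ T)ᶜ).card : ℝ) = N - S.card - T.card := by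
      have a0 : (S ∪ T).card = S.card + T.card := Finset.card_union_of_disjoint hd
      have a1 := Finset.card_compl_add_card (S ∪ T)
      rw [Fintype.card_fin, a0] at a1
      have : (((S ∪ T)ᶜ).card : ℝ) + (S.card + T.card) = N := by exact_mod_cast a1
      linarith
    have hsW : (S.card : ℝ) ≤ ∑ u ∈ S, W u := by
      calc (S.card : ℝ) = ∑ y ∈ S, 1 := by simp
        _ ≤ _ := Finset.sum_le_sum fun y _ => hW y
    have hc0 : (0 : ℝ) ≤ ((S ∪ T)ᶜ).card := Nat.cast_nonneg _
    have q1 : Real.exp (-(β / N * (∑ u ∈ S, W u) * ((S ∪ T)ᶜ).card)) ≤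
        Real.exp (-(3 / N * S.card * ((S ∪ T)ᶜ).card)) := by
      apply Real.exp_le_exp.mpr
      apply neg_le_neg
      gcongr
    refine q1.trans ?_
    rw [hcard]
    have hsN : S.card ≤ N := by omega
    have r1 : (0.295 : ℝ) * N ≤ S.card := by
      have : (295 : ℝ) * N ≤ 1000 * S.card := by exact_mod_cast hs1
      linarith
    have r2 : (S.card : ℝ) ≤ 0.5 * N := by
      have : (2 : ℝ) * S.card ≤ N := by exact_mod_cast hs2
      linarith
    have r3 : (m : ℝ) * T.card ≤ S.card := by exact_mod_cast hmt
    have r4 : (1000 : ℝ) * T.card ≤ S.card := by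
      have : 1000 * T.card ≤ S.card := (Nat.mul_le_mul_right _ hm).trans hmt
      exact_mod_cast this
    have hq := quad_num hN' r1 r2
    set s := S.card
    set t := T.card
    have v1 : 3 / (N : ℝ) * s * t ≤ 1.5 * t := by
      have : 3 / (N : ℝ) * s * t = 3 * (s / N) * t := by ring
      rw [this]
      have h : (s : ℝ) / N ≤ 0.5 := by rw [div_le_iff₀ hN']; exact r2
      have ht0 : (0 : ℝ) ≤ t := Nat.cast_nonneg _
      nlinarith
    have v2 : (N : ℝ) ^ t ≤ Real.exp (s / 4000) := by
      calc (N : ℝ) ^ t ≤ Real.exp (m / 4000) ^ t := by gcongr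
        _ = Real.exp (m * t / 4000) := by rw [← Real.exp_nat_mul]; congr 1; ring
        _ ≤ _ := by gcongr
    have v3 : Real.exp (-(s / 4000)) ≤ (1 / (N : ℝ)) ^ t := by
      rw [Real.exp_neg, one_div, inv_pow]
      exact inv_anti₀ (by positivity) v2
    have v4 : Real.exp (-1.0218 * s + -0.4464 * (N - s)) ≤
        (9 / 25 : ℝ) ^ s * (16 / 25) ^ (N - s) := by
      rw [Real.exp_add]
      have e1 : Real.exp (-1.0218 * s) = Real.exp (-1.0218) ^ s := by
        rw [← Real.exp_nat_mul, mul_comm]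
      have e2 : Real.exp (-0.4464 * (N - s)) = Real.exp (-0.4464) ^ (N - s) := by
        rw [← Real.exp_nat_mul, mul_comm, Nat.cast_sub hsN]
      rw [e1, e2]
      have := exp_num2
      have := exp_num3
      gcongr
    calc Real.exp (-(3 / (N : ℝ) * s * (N - s - t)))
        ≤ Real.exp ((-1.0218 * s + -0.4464 * (N - s)) + (-(s / 4000) + -0.005 * N)) := by
          apply Real.exp_le_exp.mpr
          have : 3 / (N : ℝ) * s * (N - s - t) = 3 / (N : ℝ) * s * (N - s) - 3 / (N : ℝ) * s * t := by
            ring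
          linarith
      _ = Real.exp (-1.0218 * s + -0.4464 * (N - s)) *
          (Real.exp (-(s / 4000)) * Real.exp (-0.005 * N)) := by
          rw [Real.exp_add, Real.exp_add (-(s / 4000 : ℝ))]
      _ ≤ _ := by gcongr
  refine (Finset.sum_le_sum h2).trans ?_
  refine (Finset.sum_le_sum_of_subset_of_nonneg (Finset.filter_subset _ _) ?_).trans ?_
  · intro x _ _
    positivity
  rw [← Finset.univ_product_univ, Finset.sum_product]
  simp_rw [← Finset.mul_sum, ← Finset.sum_mul]
  have c1 := Finset.sum_pow_mul_eq_add_pow (9 / 25 : ℝ) (16 / 25) (Finset.univ : Finset (Fin N))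
  rw [Finset.powerset_univ, Finset.card_univ, Fintype.card_fin] at c1
  rw [c1]
  have c3 := sum_finset_pow_div_le N hN 1 (by norm_num)
  have c4 : (9 / 25 + 16 / 25 : ℝ) ^ N = 1 := by norm_num
  rw [c4, one_mul]
  gcongr

/-- Vertex weights of the SNR graph. -/
def snrW (γ : ℝ) (N : ℕ) (i : Fin N) : ℝ := (N : ℝ) ^ γ * (((i : ℕ) + 1 : ℕ) : ℝ) ^ (-γ)

theorem snrW_ge (γ : ℝ) (hγ : 0 ≤ γ) (N : ℕ) (i : Fin N) : 1 ≤ snrW γ N i := by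
  unfold snrW
  have h1 : (0 : ℝ) < (((i : ℕ) + 1 : ℕ) : ℝ) := by positivity
  have h2 : (((i : ℕ) + 1 : ℕ) : ℝ) ≤ N := by exact_mod_cast i.2
  rw [Real.rpow_neg h1.le, ← div_eq_mul_inv, le_div_iff₀ (Real.rpow_pos_of_pos h1 _), one_mul]
  exact Real.rpow_le_rpow h1.le h2 hγ

theorem snr_eq (β γ : ℝ) (N : ℕ) (hN : 0 < N) (i j : Fin N) :
    snrEdgeProb β γ N ((i : ℕ) + 1) ((j : ℕ) + 1) =
      1 - Real.exp (-(β / N * snrW γ N i * snrW γ N j)) := by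
  have hN' : (0 : ℝ) < N := by exact_mod_cast hN
  unfold snrEdgeProb snrW
  have : (N : ℝ) ^ (2 * γ - 1) = (N : ℝ) ^ γ * (N : ℝ) ^ γ / N := by
    rw [← Real.rpow_add hN', Real.rpow_sub hN', Real.rpow_one]; ring_nf
  rw [this]
  congr 3
  ring

theorem snr_symm (β γ : ℝ) (N i j : ℕ) : snrEdgeProb β γ N i j = snrEdgeProb β γ N j i := by
  unfold snrEdgeProb
  congr 3
  ring

theorem snr_01 (β γ : ℝ) (hβ : 0 ≤ β) (N i j : ℕ) :
    0 ≤ snrEdgeProb β γ N i j ∧ snrEdgeProb β γ N i j ≤ 1 := by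
  unfold snrEdgeProb
  have h : 0 ≤ β * (N : ℝ) ^ (2 * γ - 1) * (i : ℝ) ^ (-γ) * (j : ℝ) ^ (-γ) := by positivity
  have h1 : Real.exp (-(β * (N : ℝ) ^ (2 * γ - 1) * (i : ℝ) ^ (-γ) * (j : ℝ) ^ (-γ))) ≤ 1 :=
    Real.exp_le_one_iff.mpr (by linarith)
  have h2 := Real.exp_pos (-(β * (N : ℝ) ^ (2 * γ - 1) * (i : ℝ) ^ (-γ) * (j : ℝ) ^ (-γ)))
  constructor <;> linarith

theorem mixing_of_no_bad {N : ℕ} (G : SimpleGraph (Fin N)) (m : ℕ) (hm : 1 ≤ m)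
    (hno : ∀ S, ¬ BadSet G m S) (t : ℝ) (ht : 0 ≤ t)
    (hcard : (N : ℝ) * Real.exp (-(t / (18 * (m : ℝ) ^ 2))) ≤ 1 / 4) (v : Fin N) :
    vsrwMixingTime (G.induce {w : Fin N | G.Reachable v w}) ≤ t := by
  have hm' : (1 : ℝ) ≤ m := by exact_mod_cast hm
  refine mixing_of_poincare _ (18 * (m : ℝ) ^ 2) (by positivity) ?_ t ht ?_
  · intro g hg
    refine poincare_of_iso _ m hm' ?_ g hg
    intro S hS
    have := iso_of_no_bad G m v hno {w : Fin N | G.Reachable v w} (fun w => Iff.rfl) S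
      (by convert hS)
    have h2 : S.card ≤ m * (symBdry (G.induce {w : Fin N | G.Reachable v w}) S).card := by
      convert this
    exact_mod_cast h2
  · refine le_trans (mul_le_mul_of_nonneg_right ?_ (Real.exp_nonneg _)) hcard
    have h2 : Fintype.card ↥{w : Fin N | G.Reachable v w} ≤ N := by
      have h3 := Fintype.card_subtype_le (fun w : Fin N => w ∈ {w : Fin N | G.Reachable v w})
      rw [Fintype.card_fin] at h3
      convert h3
    exact_mod_cast h2

/-- For `β ≥ 3` and `γ ∈ [0,1)`, there is `C > 0` such that with probability
tending to `1` as `N → ∞`, the variable speed random walk on the largest connected component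
of the Simplified Norros–Reittu graph `G_N` has mixing time at most `log^C N`. -/
theorem vsrw_mixing_snr_giant
    (β γ : ℝ) (hβ : 3 ≤ β) (hγ : γ ∈ Set.Ico (0 : ℝ) 1) :
    ∃ C > (0 : ℝ),
      Tendsto
        (fun N : ℕ =>
          snrProb β γ N (fun G =>
            ∀ v : Fin N, (∀ w : Fin N, compCard G w ≤ compCard G v) →
              vsrwMixingTime (G.induce {w : Fin N | G.Reachable v w}) ≤ Real.log N ^ C))
        atTop (nhds 1) := by
  refine ⟨4, by norm_num, ?_⟩
  have hlog : Tendsto (fun N : ℕ => Real.log N) atTop atTop :=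
    Real.tendsto_log_atTop.comp tendsto_natCast_atTop_atTop
  have hlim : Tendsto (fun N : ℕ => 1 - (2 * Real.exp 3 * (1 / (N : ℝ)) +
      Real.exp 1 * Real.exp (-0.005 * N))) atTop (nhds 1) := by
    have t1 : Tendsto (fun N : ℕ => 1 / (N : ℝ)) atTop (nhds 0) :=
      tendsto_one_div_atTop_nhds_zero_nat
    have t2 : Tendsto (fun N : ℕ => Real.exp (-0.005 * (N : ℝ))) atTop (nhds 0) := by
      refine Real.tendsto_exp_atBot.comp ?_
      exact tendsto_natCast_atTop_atTop.const_mul_atTop_of_neg (by norm_num)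
    have := ((t1.const_mul (2 * Real.exp 3)).add (t2.const_mul (Real.exp 1))).const_sub 1
    simpa using this
  have h01 := snr_01 β γ (by linarith)
  refine tendsto_of_tendsto_of_tendsto_of_le_of_le' hlim tendsto_const_nhds ?_ ?_
  · filter_upwards [hlog.eventually_ge_atTop (36 * 4001 ^ 2), eventually_ge_atTop 4] with N hl hN4
    have hN : 0 < N := by omega
    have hN' : (0 : ℝ) < N := by exact_mod_cast hN
    have hN4' : (4 : ℝ) ≤ N := by exact_mod_cast hN4
    set l := Real.log N with hldef
    set m := ⌈4000 * l⌉₊ with hmdef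
    have hm1 : 4000 * l ≤ m := Nat.le_ceil _
    have hm2 : (m : ℝ) ≤ 4001 * l := by
      have := Nat.ceil_lt_add_one (a := 4000 * l) (by linarith)
      have hl1 : 1 ≤ l := le_trans (by norm_num) hl
      linarith
    have hm3 : 1000 ≤ m := by
      have : (1000 : ℝ) ≤ m := by linarith
      exact_mod_cast this
    have hmN : (N : ℝ) ≤ Real.exp (m / 4000) := by
      rw [← Real.exp_log hN']
      apply Real.exp_le_exp.mpr
      rw [← hldef]
      linarith
    have hs := small_regime (snrEdgeProb β γ N) N hN (h01 N) (snr_symm β γ N) (snrW γ N)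
      (snrW_ge γ hγ.1 N) β hβ (snr_eq β γ N hN) m hm3 hmN
    have hL := large_regime (snrEdgeProb β γ N) N hN (h01 N) (snr_symm β γ N) (snrW γ N)
      (snrW_ge γ hγ.1 N) β hβ (snr_eq β γ N hN) m hm3 hmN
    have hmix : snrProb β γ N (fun G => ∀ S, ¬ BadSet G m S) ≤ snrProb β γ N (fun G =>
            ∀ v : Fin N, (∀ w : Fin N, compCard G w ≤ compCard G v) →
              vsrwMixingTime (G.induce {w : Fin N | G.Reachable v w}) ≤ l ^ (4 : ℝ)) := by
      refine graphProb_mono _ N (h01 N) _ _ ?_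
      intro G hno v _
      have hl0 : 0 < l := by linarith
      refine mixing_of_no_bad G m (by omega) hno _ (by positivity) ?_ v
      have e1 : l ^ (4 : ℝ) = l ^ 4 := by
        rw [← Real.rpow_natCast]; norm_num
      rw [e1]
      have e2 : 2 * l ≤ l ^ 4 / (18 * (m : ℝ) ^ 2) := by
        have hmpos : (0 : ℝ) < m := by linarith
        rw [le_div_iff₀ (by positivity)]
        calc 2 * l * (18 * (m : ℝ) ^ 2) ≤ 2 * l * (18 * (4001 * l) ^ 2) := by gcongr
          _ = (36 * 4001 ^ 2) * l ^ 3 := by ring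
          _ ≤ l * l ^ 3 := by gcongr
          _ = l ^ 4 := by ring
      calc (N : ℝ) * Real.exp (-(l ^ 4 / (18 * (m : ℝ) ^ 2)))
          ≤ N * Real.exp (-(2 * l)) := by gcongr
        _ = 1 / N := by
            have : Real.exp (-(2 * l)) = (N : ℝ)⁻¹ * (N : ℝ)⁻¹ := by
              rw [show -(2 * l) = -l + -l by ring, Real.exp_add, Real.exp_neg, hldef,
                Real.exp_log hN']
            rw [this]; field_simp
        _ ≤ 1 / 4 := by gcongr
    refine le_trans ?_ hmix
    unfold snrProb
    rw [graphProb_compl]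
    have hU : graphProb (snrEdgeProb β γ N) N (fun G => ¬ ∀ S, ¬ BadSet G m S) ≤
        graphProb (snrEdgeProb β γ N) N
          (fun G => ∃ S, BadSet G m S ∧ 1000 * S.card ≤ 295 * N) +
        graphProb (snrEdgeProb β γ N) N
          (fun G => ∃ S, BadSet G m S ∧ 295 * N ≤ 1000 * S.card) := by
      have hu := graphProb_union (snrEdgeProb β γ N) N (h01 N) (Finset.univ : Finset Bool)
        (fun b G => if b then ∃ S, BadSet G m S ∧ 1000 * S.card ≤ 295 * N
          else ∃ S, BadSet G m S ∧ 295 * N ≤ 1000 * S.card)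
      simp only [Fintype.sum_bool, if_true] at hu
      refine le_trans (graphProb_mono _ N (h01 N) _ _ ?_) (hu.trans (le_of_eq (by simp)))
      intro G hG
      push Not at hG
      obtain ⟨S, hS⟩ := hG
      rcases le_total (1000 * S.card) (295 * N) with h | h
      · exact ⟨true, Finset.mem_univ _, by simpa using ⟨S, hS, h⟩⟩
      · exact ⟨false, Finset.mem_univ _, by simpa using ⟨S, hS, h⟩⟩
    have hs2 : ((N : ℝ) + 1) * Real.exp 3 / N ^ 2 ≤ 2 * Real.exp 3 * (1 / (N : ℝ)) := by
      have : 2 * Real.exp 3 * (1 / (N : ℝ)) = (2 * N) * Real.exp 3 / N ^ 2 := by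
        field_simp
      rw [this]
      gcongr
      linarith
    linarith
  · filter_upwards with N
    unfold snrProb
    rw [← graphProb_true (snrEdgeProb β γ N) N]
    exact graphProb_mono _ N (h01 N) _ _ fun _ _ => trivial
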